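/- Let F_2/F_1 be a finite Galois extension of fields with Galois group G, let j: F_1 ↪ F_2 be the inclusion, and let n ≥ 1. Then the induced map j_*: K_n^M(F_1)_ℚ → K_n^M(F_2)_ℚ is injective and its image equals the subspace (K_n^M(F_2)_ℚ)^G of G-invariants (where G acts on K_n^M(F_2)_ℚ by functoriality); i.e., j_* induces an isomorphism K_n^M(F_1)_ℚ ≅ (K_n^M(F_2)_ℚ)^G. -/

import Mathlib

open scoped TensorProduct
open ExteriorAlgebra

noncomputable section ChowPrelim

universe u

/-- The ℚ-vector space `F^× ⊗ ℚ` attached to a field `F`. -/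
abbrev UnitsQ (F : Type u) [Field F] : Type u := ℚ ⊗[ℤ] (Additive Fˣ)

/-- The canonical map `F → F^× ⊗ ℚ`, sending a nonzero `x` to `x ⊗ 1` and `0` to `0`. -/
noncomputable def mkQ {F : Type u} [Field F] (x : F) : UnitsQ F :=
  letI := Classical.dec (x = 0)
  if h : x = 0 then 0 else (1 : ℚ) ⊗ₜ[ℤ] (Additive.ofMul (Units.mk0 x h))

/-- The wedge `x₁ ∧ ⋯ ∧ xₙ ∈ Λ^n (F^× ⊗ ℚ)` of a family of elements of `F`. -/
noncomputable def wedgeF {F : Type u} [Field F] (n : ℕ) (x : Fin n → F) :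
    ⋀[ℚ]^n (UnitsQ F) :=
  ⟨ExteriorAlgebra.ιMulti ℚ n (fun i => mkQ (x i)),
    ExteriorAlgebra.ιMulti_range ℚ n ⟨_, rfl⟩⟩

/-- Wedge of an abstract family of vectors. -/
noncomputable def wedgeV {M : Type u} [AddCommGroup M] [Module ℚ M] (n : ℕ) (v : Fin n → M) :
    ⋀[ℚ]^n M :=
  ⟨ExteriorAlgebra.ιMulti ℚ n v, ExteriorAlgebra.ιMulti_range ℚ n ⟨_, rfl⟩⟩

/-- The product `a ∧ v₁ ∧ ⋯ ∧ v_q : Λ^r M` of an element `a ∈ Λ^p M` with `q` further vectors,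
where `p + q = r`. -/
noncomputable def wedgeMulC {M : Type u} [AddCommGroup M] [Module ℚ M] (p q r : ℕ)
    (h : p + q = r) (a : ⋀[ℚ]^p M) (v : Fin q → M) : ⋀[ℚ]^r M :=
  ⟨a.1 * (ExteriorAlgebra.ιMulti ℚ q v : ExteriorAlgebra ℚ M), by
    subst h
    have hmem : (ExteriorAlgebra.ιMulti ℚ q v : ExteriorAlgebra ℚ M) ∈
        (LinearMap.range (ι ℚ : M →ₗ[ℚ] ExteriorAlgebra ℚ M)) ^ q :=
      ExteriorAlgebra.ιMulti_range ℚ q ⟨_, rfl⟩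
    have h2 := Submodule.mul_mem_mul a.2 hmem
    rw [← pow_add] at h2
    exact h2⟩

/-- The functorial map `Λ^n M → Λ^n N` induced by a linear map. -/
noncomputable def powMap {M N : Type u} [AddCommGroup M] [Module ℚ M]
    [AddCommGroup N] [Module ℚ N] (n : ℕ) (f : M →ₗ[ℚ] N) :
    ⋀[ℚ]^n M →ₗ[ℚ] ⋀[ℚ]^n N :=
  (ExteriorAlgebra.map f).toLinearMap.restrict (p := ⋀[ℚ]^n M) (q := ⋀[ℚ]^n N)
    (by
      intro x hx
      have h : Submodule.map (ExteriorAlgebra.map f).toLinearMap (⋀[ℚ]^n M) ≤ ⋀[ℚ]^n N := by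
        rw [← ExteriorAlgebra.ιMulti_span_fixedDegree, ← ExteriorAlgebra.ιMulti_span_fixedDegree,
          Submodule.map_span]
        refine Submodule.span_le.2 ?_
        rintro _ ⟨_, ⟨v, rfl⟩, rfl⟩
        exact Submodule.subset_span ⟨f ∘ v, (ExteriorAlgebra.map_apply_ιMulti f v).symm⟩
      exact h ⟨x, hx, rfl⟩)

/-- The linear map `F^× ⊗ ℚ → K^× ⊗ ℚ` induced by a field embedding. -/
noncomputable def unitsQMap {F K : Type u} [Field F] [Field K] (j : F →+* K) :
    UnitsQ F →ₗ[ℚ] UnitsQ K :=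
  LinearMap.baseChange ℚ
    ((MonoidHom.toAdditive (Units.map (j : F →* K))).toIntLinearMap)

section PreBloch

variable (F : Type u) [Field F]

/-- Auxiliary "difference" of two points of `P^1(F) = Option F` (`none` is `∞`),
used to define the cross-ratio. -/
def pdiff : Option F → Option F → F
  | some a, some b => a - b
  | _, _ => 1

/-- The cross-ratio of four points of `P^1(F)`, as an element of `F`
(it lies in `F ∖ {0,1}` when the four points are distinct). -/
def crossRatio (x1 x2 x3 x4 : Option F) : F :=
  (pdiff F x1 x3 * pdiff F x2 x4) / (pdiff F x1 x4 * pdiff F x2 x3)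

/-- The subspace of relations defining the pre-Bloch group: `{0}₂, {1}₂, {∞}₂` and the
five-term cross-ratio relations for five distinct points of `P^1(F)`. -/
def B2Rel : Submodule ℚ (Option F →₀ ℚ) :=
  Submodule.span ℚ
    ({Finsupp.single (some 0) 1, Finsupp.single (some 1) 1, Finsupp.single none 1} ∪
      {r | ∃ x : Fin 5 → Option F, Function.Injective x ∧
        r = ∑ i : Fin 5, ((-1 : ℚ) ^ (i : ℕ)) •
          Finsupp.single (some (crossRatio F (x (i.succAbove 0)) (x (i.succAbove 1))
            (x (i.succAbove 2)) (x (i.succAbove 3)))) (1 : ℚ)})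

/-- The pre-Bloch group `B₂(F)` (with ℚ-coefficients). -/
abbrev B2 : Type u := (Option F →₀ ℚ) ⧸ B2Rel F

/-- The generator `{x}₂` of the pre-Bloch group. -/
def B2.gen {F : Type u} [Field F] (x : F) : B2 F :=
  Submodule.Quotient.mk (Finsupp.single (some x) 1)

end PreBloch

section Deltas

variable (F : Type u) [Field F]

/-- `d` is the differential `δ₂ : B₂(F) → Λ² F^×`, `{x}₂ ↦ x ∧ (1-x)`. -/
def IsDelta2 (d : B2 F →ₗ[ℚ] ⋀[ℚ]^2 (UnitsQ F)) : Prop :=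
  ∀ x : F, x ≠ 0 → x ≠ 1 → d (B2.gen x) = wedgeF 2 ![x, 1 - x]

/-- `d` is the differential `δ₃ : B₂(F) ⊗ F^× → Λ³ F^×`, `{x}₂ ⊗ y ↦ x ∧ (1-x) ∧ y`. -/
def IsDelta3 (d : B2 F ⊗[ℚ] UnitsQ F →ₗ[ℚ] ⋀[ℚ]^3 (UnitsQ F)) : Prop :=
  ∀ x y : F, x ≠ 0 → x ≠ 1 → y ≠ 0 →
    d (B2.gen x ⊗ₜ mkQ y) = wedgeF 3 ![x, 1 - x, y]

/-- `d` is the differential `δ₄ : B₂(F) ⊗ Λ² F^× → Λ⁴ F^×`,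
`{x}₂ ⊗ (y ∧ z) ↦ x ∧ (1-x) ∧ y ∧ z`. -/
def IsDelta4 (d : B2 F ⊗[ℚ] (⋀[ℚ]^2 (UnitsQ F)) →ₗ[ℚ] ⋀[ℚ]^4 (UnitsQ F)) : Prop :=
  ∀ x y z : F, x ≠ 0 → x ≠ 1 → y ≠ 0 → z ≠ 0 →
    d (B2.gen x ⊗ₜ wedgeF 2 ![y, z]) = wedgeF 4 ![x, 1 - x, y, z]

end Deltas

section Valuations

variable {F K : Type u} [Field F] [Field K]

/-- `ν` is (the additive form of) a discrete valuation on `F`: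
a surjection onto `ℤ` defined on `F ∖ {0}`, multiplicative, and
satisfying the ultrametric inequality. -/
structure IsDVal (ν : F → ℤ) : Prop where
  map_mul : ∀ x y : F, x ≠ 0 → y ≠ 0 → ν (x * y) = ν x + ν y
  map_add : ∀ x y : F, x ≠ 0 → y ≠ 0 → x + y ≠ 0 → min (ν x) (ν y) ≤ ν (x + y)
  surj : ∀ n : ℤ, ∃ x : F, x ≠ 0 ∧ ν x = n

/-- `res : F → K` realizes `K` as the residue field of the discrete valuation `ν`:
it is a surjective ring homomorphism on the valuation ring `O_ν` with kernel the
maximal ideal `m_ν` (and arbitrary elsewhere). -/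
structure IsResidue (ν : F → ℤ) (res : F → K) : Prop where
  map_one : res 1 = 1
  map_add : ∀ x y : F, (x = 0 ∨ 0 ≤ ν x) → (y = 0 ∨ 0 ≤ ν y) →
    res (x + y) = res x + res y
  map_mul : ∀ x y : F, (x = 0 ∨ 0 ≤ ν x) → (y = 0 ∨ 0 ≤ ν y) →
    res (x * y) = res x * res y
  zero_iff : ∀ x : F, (x = 0 ∨ 0 ≤ ν x) → (res x = 0 ↔ (x = 0 ∨ 0 < ν x))
  surj : ∀ z : K, ∃ x : F, (x = 0 ∨ 0 ≤ ν x) ∧ res x = z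

/-- `D` is the tame symbol `∂_ν^{(n+1)} : Λ^{n+1} F^× → Λ^n K^×` attached to the discrete
valuation `ν` with residue field `K` (via `res`): it is characterized by
`∂(π ∧ u₂ ∧ ⋯ ∧ u_{n+1}) = ū₂ ∧ ⋯ ∧ ū_{n+1}` for a uniformizer `π` and units `uᵢ`. -/
def IsTame (ν : F → ℤ) (res : F → K) (n : ℕ)
    (D : ⋀[ℚ]^(n + 1) (UnitsQ F) →ₗ[ℚ] ⋀[ℚ]^n (UnitsQ K)) : Prop :=
  ∀ (π : F) (u : Fin n → F), π ≠ 0 → ν π = 1 → (∀ i, u i ≠ 0 ∧ ν (u i) = 0) →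
    D (wedgeF (n + 1) (Fin.cons π u)) = wedgeF n (fun i => res (u i))

/-- `D` is the tame symbol `∂_ν^{(2)} : Λ² F^× → K^×`, with target the residue field itself. -/
def IsTame2U (ν : F → ℤ) (res : F → K) (D : ⋀[ℚ]^2 (UnitsQ F) →ₗ[ℚ] UnitsQ K) : Prop :=
  ∀ π u : F, π ≠ 0 → ν π = 1 → u ≠ 0 → ν u = 0 → D (wedgeF 2 ![π, u]) = mkQ (res u)

/-- `D` is the tame symbol `∂_ν : B₂(F) ⊗ F^× → B₂(K)`. -/
def IsTameB1 (ν : F → ℤ) (res : F → K)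
    (D : B2 F ⊗[ℚ] UnitsQ F →ₗ[ℚ] B2 K) : Prop :=
  (∀ a b : F, a ≠ 0 → a ≠ 1 → ν a ≠ 0 → b ≠ 0 → D (B2.gen a ⊗ₜ mkQ b) = 0) ∧
  (∀ u b : F, u ≠ 0 → ν u = 0 → b ≠ 0 →
    D (B2.gen u ⊗ₜ mkQ b) = -((ν b : ℚ) • B2.gen (res u)))

/-- `D` is the tame symbol `∂_ν : B₂(F) ⊗ Λ² F^× → B₂(K) ⊗ K^×`, where `D2` is the tame
symbol `∂_ν^{(2)}`. -/
def IsTameB2 (ν : F → ℤ) (res : F → K) (D2 : ⋀[ℚ]^2 (UnitsQ F) →ₗ[ℚ] UnitsQ K)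
    (D : B2 F ⊗[ℚ] (⋀[ℚ]^2 (UnitsQ F)) →ₗ[ℚ] B2 K ⊗[ℚ] UnitsQ K) : Prop :=
  (∀ (a : F) (b : ⋀[ℚ]^2 (UnitsQ F)), a ≠ 0 → a ≠ 1 → ν a ≠ 0 → D (B2.gen a ⊗ₜ b) = 0) ∧
  (∀ (u : F) (b : ⋀[ℚ]^2 (UnitsQ F)), u ≠ 0 → ν u = 0 →
    D (B2.gen u ⊗ₜ b) = -(B2.gen (res u) ⊗ₜ D2 b))

/-- `D` is the tame symbol `∂_ν : B₂(F) ⊗ Λ^{n+1} F^× → B₂(K) ⊗ Λ^n K^×`, where `Dn` is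
the tame symbol `∂_ν^{(n+1)}`. -/
def IsTameBGen (ν : F → ℤ) (res : F → K) (n : ℕ)
    (Dn : ⋀[ℚ]^(n + 1) (UnitsQ F) →ₗ[ℚ] ⋀[ℚ]^n (UnitsQ K))
    (D : B2 F ⊗[ℚ] (⋀[ℚ]^(n + 1) (UnitsQ F)) →ₗ[ℚ] B2 K ⊗[ℚ] (⋀[ℚ]^n (UnitsQ K))) : Prop :=
  (∀ (a : F) (b : ⋀[ℚ]^(n + 1) (UnitsQ F)), a ≠ 0 → a ≠ 1 → ν a ≠ 0 →
    D (B2.gen a ⊗ₜ b) = 0) ∧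
  (∀ (u : F) (b : ⋀[ℚ]^(n + 1) (UnitsQ F)), u ≠ 0 → ν u = 0 →
    D (B2.gen u ⊗ₜ b) = -(B2.gen (res u) ⊗ₜ Dn b))

end Valuations

section Fields

variable (k F : Type u) [Field k] [Field F] [Algebra k F]

/-- `F` is a finitely generated extension of `k` of transcendence degree `1`. -/
def IsFields1 : Prop :=
  (∃ s : Finset F, IntermediateField.adjoin k (s : Set F) = ⊤) ∧
  ∃ x : F, Transcendental k x ∧
    Algebra.IsAlgebraic (IntermediateField.adjoin k {x}) F

/-- `F` is a finitely generated extension of `k` of transcendence degree `2`. -/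
def IsFields2 : Prop :=
  (∃ s : Finset F, IntermediateField.adjoin k (s : Set F) = ⊤) ∧
  ∃ x y : F, AlgebraicIndependent k ![x, y] ∧
    Algebra.IsAlgebraic (IntermediateField.adjoin k {x, y}) F

/-- `res : F → k` is the canonical residue map of `ν` onto `k`
(restricting to the identity on `k`). -/
def GoodResK (ν : F → ℤ) (res : F → k) : Prop :=
  IsResidue ν res ∧ ∀ c : k, res (algebraMap k F c) = c

/-- The set `val(F)` of discrete valuations of `F` trivial on `k` with residue field `k`. -/
def ValInd : Type u :=
  {ν : F → ℤ // IsDVal ν ∧ (∀ c : k, c ≠ 0 → ν (algebraMap k F c) = 0) ∧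
    ∃ res : F → k, GoodResK k F ν res}

/-- `h : Λ³ F^× → B₂(k)` is a lifted reciprocity map on `F ∈ Fields₁`:
(1) `-δ₂(h a) = Σ_{ν ∈ val(F)} ∂_ν^{(3)} a`;
(2) `h (δ₃ c) = Σ_{ν ∈ val(F)} ∂_ν c`;
(3) `h` vanishes on the image of `Λ² F^× ⊗ k^× → Λ³ F^×`. -/
def IsLiftedRec (h : ⋀[ℚ]^3 (UnitsQ F) →ₗ[ℚ] B2 k) : Prop :=
  (∀ d2 : B2 k →ₗ[ℚ] ⋀[ℚ]^2 (UnitsQ k), IsDelta2 k d2 →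
    ∀ res : ∀ _ : ValInd k F, F → k, (∀ v : ValInd k F, GoodResK k F v.1 (res v)) →
    ∀ D : ∀ _ : ValInd k F, ⋀[ℚ]^3 (UnitsQ F) →ₗ[ℚ] ⋀[ℚ]^2 (UnitsQ k),
      (∀ v : ValInd k F, IsTame v.1 (res v) 2 (D v)) →
    ∀ a : ⋀[ℚ]^3 (UnitsQ F), -(d2 (h a)) = ∑ᶠ v : ValInd k F, D v a) ∧
  (∀ d3 : B2 F ⊗[ℚ] UnitsQ F →ₗ[ℚ] ⋀[ℚ]^3 (UnitsQ F), IsDelta3 F d3 →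
    ∀ res : ∀ _ : ValInd k F, F → k, (∀ v : ValInd k F, GoodResK k F v.1 (res v)) →
    ∀ DB : ∀ _ : ValInd k F, B2 F ⊗[ℚ] UnitsQ F →ₗ[ℚ] B2 k,
      (∀ v : ValInd k F, IsTameB1 v.1 (res v) (DB v)) →
    ∀ c : B2 F ⊗[ℚ] UnitsQ F, h (d3 c) = ∑ᶠ v : ValInd k F, DB v c) ∧
  (∀ (y z : F) (c : k), y ≠ 0 → z ≠ 0 → c ≠ 0 →
    h (wedgeF 3 ![y, z, algebraMap k F c]) = 0)

end Fields

/-- The degree `[K : j(F)]` of a field embedding. -/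
noncomputable def fieldDeg {F K : Type u} [Field F] [Field K] (j : F →+* K) : ℕ :=
  letI : Algebra F K := j.toAlgebra
  Module.finrank F K

/-- The pullback `j^* h = (1/[F₂ : j(F₁)]) · h ∘ j_*` of a lifted reciprocity map. -/
noncomputable def pullRec (k F₁ F₂ : Type u) [Field k] [Field F₁] [Field F₂]
    (j : F₁ →+* F₂) (h : ⋀[ℚ]^3 (UnitsQ F₂) →ₗ[ℚ] B2 k) :
    ⋀[ℚ]^3 (UnitsQ F₁) →ₗ[ℚ] B2 k :=
  ((fieldDeg j : ℚ))⁻¹ • (h ∘ₗ powMap 3 (unitsQMap j))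

end ChowPrelim

noncomputable section ChowPrelim2

universe u

open scoped TensorProduct

/-- The monic irreducible polynomials over `F`, indexing the closed points of `𝔸¹_F`,
i.e. the general discrete valuations of `F(t)`. -/
def MonicIrr (F : Type u) [Field F] : Type u :=
  {p : Polynomial F // p.Monic ∧ Irreducible p}

/-- The residue field `F(p) = F[t]/(p)` of the valuation attached to a monic irreducible
polynomial `p`. -/
def ResField {F : Type u} [Field F] (p : MonicIrr F) : Type u := AdjoinRoot p.1

noncomputable instance ResField.instField {F : Type u} [Field F] (p : MonicIrr F) :
    Field (ResField p) :=
  letI : Fact (Irreducible p.1) := ⟨p.2.2⟩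
  inferInstanceAs (Field (AdjoinRoot p.1))

/-- `ν` is the discrete valuation of `F(t)` attached to the monic irreducible polynomial `p`. -/
def IsNuP {F : Type u} [Field F] (p : MonicIrr F) (ν : RatFunc F → ℤ) : Prop :=
  IsDVal ν ∧ ν (algebraMap (Polynomial F) (RatFunc F) p.1) = 1 ∧
    ∀ g : Polynomial F, g ≠ 0 → ¬(p.1 ∣ g) →
      ν (algebraMap (Polynomial F) (RatFunc F) g) = 0

/-- `res` is the canonical residue map `F(t) → F(p)` of the valuation attached to `p`. -/
def IsResP {F : Type u} [Field F] (p : MonicIrr F) (ν : RatFunc F → ℤ)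
    (res : RatFunc F → ResField p) : Prop :=
  IsResidue ν res ∧ ∀ g : Polynomial F,
    res (algebraMap (Polynomial F) (RatFunc F) g) =
      (AdjoinRoot.mk p.1 g : AdjoinRoot p.1)

/-- Bundled realization of the residue field of a discrete valuation `ν` on `L`
(trivial on `k`): a field `R` with a `k`-algebra structure together with the residue map. -/
structure ResData (k L : Type u) [Field k] [Field L] [Algebra k L] (ν : L → ℤ) :
    Type (u + 1) where
  R : Type u
  [fieldR : Field R]
  [algR : Algebra k R]
  res : L → R
  isRes : IsResidue ν res
  compat : ∀ c : k, res (algebraMap k L c) = algebraMap k R c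

attribute [instance] ResData.fieldR ResData.algR

/-- The set `dval(L)` of divisorial valuations of `L ∈ Fields₂`: discrete valuations trivial
on `k` whose residue field is a finitely generated extension of `k` of transcendence
degree `1`. -/
def DValInd (k L : Type u) [Field k] [Field L] [Algebra k L] : Type u :=
  {ν : L → ℤ // IsDVal ν ∧ (∀ c : k, c ≠ 0 → ν (algebraMap k L c) = 0) ∧
    ∃ rd : ResData k L ν, IsFields1 k rd.R}

/-- A height-one prime ideal (in a domain). -/
def IsHeightOne {R : Type u} [CommRing R] (p : Ideal R) : Prop :=
  p.IsPrime ∧ p ≠ ⊥ ∧ ∀ q : Ideal R, q.IsPrime → q < p → q = ⊥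

/-- `R/p` is regular, i.e. (for a one-dimensional local ring) the maximal ideal of `R/p`
is principal. -/
def QuotRegular {R : Type u} [CommRing R] [IsLocalRing R] (p : Ideal R) : Prop :=
  ∃ t : R, Ideal.map (Ideal.Quotient.mk p) (IsLocalRing.maximalIdeal R) =
    Ideal.span {Ideal.Quotient.mk p t}

/-- The height-one primes `p` of `R` with `R/p` regular. -/
def RegPrimes (R : Type u) [CommRing R] [IsLocalRing R] : Type u :=
  {p : Ideal R // IsHeightOne p ∧ QuotRegular p}

instance RegPrimes.isPrime {R : Type u} [CommRing R] [IsLocalRing R] (p : RegPrimes R) :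
    p.1.IsPrime := p.2.1.1

/-- The residue field `κ(p) = Frac(R/p)` of a prime `p`. -/
def ResFieldP {R : Type u} [CommRing R] [IsLocalRing R] [IsDomain R] (p : RegPrimes R) :
    Type u := FractionRing (R ⧸ p.1)

noncomputable instance ResFieldP.instField {R : Type u} [CommRing R] [IsLocalRing R]
    [IsDomain R] (p : RegPrimes R) : Field (ResFieldP p) :=
  inferInstanceAs (Field (FractionRing (R ⧸ p.1)))

/-- `ν` is the discrete valuation `ν_p` of `L = Frac R` attached to a height-one prime `p`:
it is nonnegative on `R` and positive exactly on `p`. -/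
def IsNuPrime {R L : Type u} [CommRing R] [Field L] [Algebra R L] (p : Ideal R)
    (ν : L → ℤ) : Prop :=
  IsDVal ν ∧ (∀ x : R, x ≠ 0 → 0 ≤ ν (algebraMap R L x)) ∧
    ∀ x : R, x ≠ 0 → (x ∈ p ↔ 0 < ν (algebraMap R L x))

/-- `res` is the canonical residue map `L → κ(p)` of the valuation `ν_p`. -/
def IsResPrime {R L : Type u} [CommRing R] [IsLocalRing R] [IsDomain R] [Field L]
    [Algebra R L] (p : RegPrimes R) (ν : L → ℤ) (res : L → ResFieldP p) : Prop :=
  IsResidue ν res ∧ ∀ x : R,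
    res (algebraMap R L x) =
      algebraMap (R ⧸ p.1) (FractionRing (R ⧸ p.1)) (Ideal.Quotient.mk p.1 x)

/-- `ν̄` is the discrete valuation of `κ(p)` attached to the discrete valuation ring `R/p`:
nonnegative on `R/p` and positive exactly on the image of the maximal ideal of `R`. -/
def IsNuBar {R : Type u} [CommRing R] [IsLocalRing R] [IsDomain R] (p : RegPrimes R)
    (ν : ResFieldP p → ℤ) : Prop :=
  IsDVal ν ∧
  (∀ x : R ⧸ p.1, x ≠ 0 →
    0 ≤ ν (algebraMap (R ⧸ p.1) (FractionRing (R ⧸ p.1)) x)) ∧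
  ∀ x : R, Ideal.Quotient.mk p.1 x ≠ 0 →
    (x ∈ IsLocalRing.maximalIdeal R ↔
      0 < ν (algebraMap (R ⧸ p.1) (FractionRing (R ⧸ p.1)) (Ideal.Quotient.mk p.1 x)))

/-- `res` is the canonical residue map `κ(p) → k` of the valuation `ν̄_p`
(restricting to the identity on `k`). -/
def IsResBar {k R : Type u} [Field k] [CommRing R] [IsLocalRing R] [IsDomain R]
    [Algebra k R] (p : RegPrimes R) (ν : ResFieldP p → ℤ) (res : ResFieldP p → k) : Prop :=
  IsResidue ν res ∧ ∀ c : k,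
    res (algebraMap (R ⧸ p.1) (FractionRing (R ⧸ p.1))
      (Ideal.Quotient.mk p.1 (algebraMap k R c))) = c

/-- The Steinberg relations subspace of `Λ^n F^×` (with ℚ-coefficients). -/
def MilnorRel (F : Type u) [Field F] : (n : ℕ) → Submodule ℚ (⋀[ℚ]^n (UnitsQ F))
  | 0 => ⊥
  | 1 => ⊥
  | (m + 2) => Submodule.span ℚ
      {x | ∃ (a : F) (v : Fin m → F), a ≠ 0 ∧ a ≠ 1 ∧ (∀ i, v i ≠ 0) ∧
        x = wedgeF (m + 2) (Fin.cons a (Fin.cons (1 - a) v))}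

/-- The rational Milnor K-group `K_n^M(F) ⊗ ℚ`: the quotient of `Λ^n F^×` by the
Steinberg relations. -/
def MilnorQ (F : Type u) [Field F] (n : ℕ) : Type u :=
  (⋀[ℚ]^n (UnitsQ F)) ⧸ MilnorRel F n

noncomputable instance MilnorQ.instAddCommGroup (F : Type u) [Field F] (n : ℕ) :
    AddCommGroup (MilnorQ F n) :=
  inferInstanceAs (AddCommGroup ((⋀[ℚ]^n (UnitsQ F)) ⧸ MilnorRel F n))

noncomputable instance MilnorQ.instModule (F : Type u) [Field F] (n : ℕ) :
    Module ℚ (MilnorQ F n) :=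
  inferInstanceAs (Module ℚ ((⋀[ℚ]^n (UnitsQ F)) ⧸ MilnorRel F n))

/-- The class of an element of `Λ^n F^×` in `K_n^M(F) ⊗ ℚ`. -/
def MilnorQ.mk {F : Type u} [Field F] {n : ℕ} (x : ⋀[ℚ]^n (UnitsQ F)) : MilnorQ F n :=
  Submodule.Quotient.mk x

end ChowPrelim2

open scoped TensorProduct

universe u

open ExteriorAlgebra


noncomputable section MKpart1

namespace MK

/-! ### Basic facts on `mkQ` -/

section basic
variable {F : Type u} [Field F]

lemma mkQ_def {x : F} (h : x ≠ 0) :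
    mkQ x = (1 : ℚ) ⊗ₜ[ℤ] (Additive.ofMul (Units.mk0 x h)) := by
  unfold mkQ
  simp [h]

lemma mkQ_mul {x y : F} (hx : x ≠ 0) (hy : y ≠ 0) : mkQ (x * y) = mkQ x + mkQ y := by
  rw [mkQ_def hx, mkQ_def hy, mkQ_def (mul_ne_zero hx hy), ← TensorProduct.tmul_add,
    ← ofMul_mul, Units.mk0_mul]

lemma mkQ_zero : mkQ (0 : F) = 0 := by
  unfold mkQ
  simp

lemma mkQ_one : mkQ (1 : F) = 0 := by
  have h := mkQ_mul (one_ne_zero (α := F)) one_ne_zero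
  rw [mul_one] at h
  simpa using h

lemma mkQ_neg (x : F) : mkQ (-x) = mkQ x := by
  by_cases hx : x = 0
  · simp [hx]
  have h1 : mkQ (-1 : F) = 0 := by
    have h := mkQ_mul (neg_ne_zero.2 (one_ne_zero (α := F))) (neg_ne_zero.2 one_ne_zero)
    rw [neg_mul_neg, one_mul, mkQ_one, ← two_smul ℚ] at h
    simpa using h.symm
  rw [← neg_one_mul, mkQ_mul (neg_ne_zero.2 one_ne_zero) hx, h1, zero_add]

lemma mkQ_div {x y : F} (hx : x ≠ 0) (hy : y ≠ 0) : mkQ (x / y) = mkQ x - mkQ y := by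
  have h := mkQ_mul (div_ne_zero hx hy) hy
  rw [div_mul_cancel₀ _ hy] at h
  rw [h, add_sub_cancel_right]

lemma mkQ_pow {x : F} (hx : x ≠ 0) (n : ℕ) : mkQ (x ^ n) = (n : ℚ) • mkQ x := by
  induction n with
  | zero => simp [mkQ_one]
  | succ n ih => rw [pow_succ, mkQ_mul (pow_ne_zero _ hx) hx, ih]; push_cast; rw [add_smul, one_smul]

lemma span_mkQ : Submodule.span ℚ {u : UnitsQ F | ∃ x : F, x ≠ 0 ∧ u = mkQ x} = ⊤ := by
  rw [eq_top_iff]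
  rintro u -
  induction u using TensorProduct.induction_on with
  | zero => exact Submodule.zero_mem _
  | add a b ha hb => exact Submodule.add_mem _ ha hb
  | tmul q x =>
    have : (q ⊗ₜ[ℤ] x : UnitsQ F) = q • mkQ ((Additive.toMul x : Fˣ) : F) := by
      rw [mkQ_def (Units.ne_zero _), TensorProduct.smul_tmul']
      simp
    rw [this]
    exact Submodule.smul_mem _ _ (Submodule.subset_span ⟨_, Units.ne_zero _, rfl⟩)

/-- Linear maps out of `UnitsQ F` from multiplicative functions. -/
def liftQ {M : Type*} [AddCommGroup M] [Module ℚ M] (φ : F → M)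
    (hφ : ∀ x y, x ≠ 0 → y ≠ 0 → φ (x * y) = φ x + φ y) : UnitsQ F →ₗ[ℚ] M :=
  TensorProduct.AlgebraTensorModule.lift
    (LinearMap.toSpanSingleton ℚ (Additive Fˣ →ₗ[ℤ] M)
      (AddMonoidHom.toIntLinearMap
        (AddMonoidHom.mk' (fun x => φ ((Additive.toMul x : Fˣ) : F)) (by
          intro a b
          simpa using hφ _ _ (Units.ne_zero a.toMul) (Units.ne_zero b.toMul)))))

lemma liftQ_mkQ {M : Type*} [AddCommGroup M] [Module ℚ M] (φ : F → M)
    (hφ : ∀ x y, x ≠ 0 → y ≠ 0 → φ (x * y) = φ x + φ y) {x : F} (hx : x ≠ 0) :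
    liftQ φ hφ (mkQ x) = φ x := by
  rw [mkQ_def hx]
  simp [liftQ]

lemma linQ_ext {M : Type*} [AddCommGroup M] [Module ℚ M] {f g : UnitsQ F →ₗ[ℚ] M}
    (h : ∀ x : F, x ≠ 0 → f (mkQ x) = g (mkQ x)) : f = g := by
  apply LinearMap.ext_on span_mkQ
  rintro _ ⟨x, hx, rfl⟩
  exact h x hx

lemma unitsQMap_mkQ {K : Type u} [Field K] (j : F →+* K) (x : F) :
    unitsQMap j (mkQ x) = mkQ (j x) := by
  by_cases hx : x = 0
  · simp [hx, mkQ_zero]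
  have : j x ≠ 0 := by simpa using hx
  rw [mkQ_def hx, mkQ_def this]
  simp only [unitsQMap, LinearMap.baseChange_tmul]
  refine congrArg (fun z => (1 : ℚ) ⊗ₜ[ℤ] z) ?_
  apply Additive.toMul.injective
  ext
  rfl

end basic

/-! ### The symbol and the left multiplication -/

section sym
variable (F : Type u) [Field F]

/-- the quotient map -/
def mkL (n : ℕ) : ⋀[ℚ]^n (UnitsQ F) →ₗ[ℚ] MilnorQ F n := (MilnorRel F n).mkQ

lemma mkL_apply (n : ℕ) (x) : mkL F n x = MilnorQ.mk x := rfl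

lemma mkL_surj (n : ℕ) : Function.Surjective (mkL F n) := Submodule.mkQ_surjective _

/-- the symbol -/
def sym (n : ℕ) : (UnitsQ F) [⋀^Fin n]→ₗ[ℚ] MilnorQ F n :=
  (mkL F n).compAlternatingMap (exteriorPower.ιMulti ℚ n)

variable {F}

lemma sym_apply {n : ℕ} (v : Fin n → UnitsQ F) :
    sym F n v = MilnorQ.mk (exteriorPower.ιMulti ℚ n v) := rfl

lemma sym_span (n : ℕ) : Submodule.span ℚ
    {x : MilnorQ F n | ∃ v : Fin n → F, (∀ i, v i ≠ 0) ∧ x = sym F n (fun i => mkQ (v i))} = ⊤ := by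
  have h1 := exteriorPower.ιMulti_span_fixedDegree_of_span_eq_top ℚ n _
    (span_mkQ (F := F))
  have key : ∀ z (hz : z ∈ ⋀[ℚ]^n (UnitsQ F)), mkL F n ⟨z, hz⟩ ∈ Submodule.span ℚ
    {x : MilnorQ F n | ∃ v : Fin n → F, (∀ i, v i ≠ 0) ∧ x = sym F n (fun i => mkQ (v i))} := by
    intro z hz
    have hz' := hz
    rw [← h1] at hz'
    revert hz
    refine Submodule.span_induction (p := fun z _ => ∀ hz : z ∈ ⋀[ℚ]^n (UnitsQ F), mkL F n ⟨z, hz⟩ ∈ Submodule.span ℚ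
    {x : MilnorQ F n | ∃ v : Fin n → F, (∀ i, v i ≠ 0) ∧ x = sym F n (fun i => mkQ (v i))}) ?_ ?_ ?_ ?_ hz'
    · rintro _ ⟨w, hw, rfl⟩ hz
      have : ∀ i, ∃ x : F, x ≠ 0 ∧ w i = mkQ x := fun i => hw ⟨i, rfl⟩
      choose v hv hv' using this
      apply Submodule.subset_span
      refine ⟨v, hv, ?_⟩
      have : w = fun i => mkQ (v i) := funext hv'
      subst this
      rfl
    · intro hz
      convert Submodule.zero_mem _
      exact map_zero (mkL F n)
    · intro x y hx hy h1' h2' hz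
      rw [h1] at hx hy
      have := Submodule.add_mem _ (h1' hx) (h2' hy)
      rw [← map_add] at this
      exact this
    · intro c x hx h1' hz
      rw [h1] at hx
      have := Submodule.smul_mem _ c (h1' hx)
      rw [← map_smul] at this
      exact this
  rw [eq_top_iff]
  rintro x -
  obtain ⟨⟨z, hz⟩, rfl⟩ := mkL_surj F n x
  exact key z hz

lemma K_ext {n : ℕ} {N : Type u} [AddCommGroup N] [Module ℚ N] {f g : MilnorQ F n →ₗ[ℚ] N}
    (h : ∀ v : Fin n → UnitsQ F, f (sym F n v) = g (sym F n v)) : f = g := by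
  apply LinearMap.ext_on (sym_span n)
  rintro _ ⟨v, hv, rfl⟩
  exact h _

/-- The vanishing on Steinberg relations. -/
def StAlt {N : Type u} [AddCommGroup N] [Module ℚ N] : (n : ℕ) →
    ((UnitsQ F) [⋀^Fin n]→ₗ[ℚ] N) → Prop
  | 0, _ => True
  | 1, _ => True
  | (m + 2), φ => ∀ (a : F) (v : Fin m → UnitsQ F), a ≠ 0 → a ≠ 1 →
      (∀ i, ∃ x : F, x ≠ 0 ∧ v i = mkQ x) →
      φ (Fin.cons (mkQ a) (Fin.cons (mkQ (1 - a)) v)) = 0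

lemma cons2 {m : ℕ} (a b : F) (v : Fin m → F) :
    (fun i => mkQ ((Fin.cons a (Fin.cons b v) : Fin (m + 2) → F) i)) =
      (Fin.cons (mkQ a) (Fin.cons (mkQ b) (fun i => mkQ (v i))) : Fin (m + 2) → UnitsQ F) := by
  funext i
  refine Fin.cases rfl (fun i => ?_) i
  refine Fin.cases rfl (fun i => rfl) i

/-- Linear maps out of the Milnor K-group. -/
def Klift {N : Type u} [AddCommGroup N] [Module ℚ N] {n : ℕ}
    (φ : (UnitsQ F) [⋀^Fin n]→ₗ[ℚ] N) (h : StAlt n φ) : MilnorQ F n →ₗ[ℚ] N :=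
  (MilnorRel F n).liftQ (exteriorPower.alternatingMapLinearEquiv φ) (by
    match n, φ, h with
    | 0, _, _ => exact bot_le
    | 1, _, _ => exact bot_le
    | (m + 2), φ, h =>
      refine Submodule.span_le.2 ?_
      rintro _ ⟨a, v, ha, ha1, hv, rfl⟩
      have : wedgeF (m + 2) (Fin.cons a (Fin.cons (1 - a) v)) =
          exteriorPower.ιMulti ℚ (m + 2)
            (Fin.cons (mkQ a) (Fin.cons (mkQ (1 - a)) (fun i => mkQ (v i)))) := by
        rw [← cons2]
        rfl
      rw [this]
      simp only [SetLike.mem_coe, LinearMap.mem_ker,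
        exteriorPower.alternatingMapLinearEquiv_apply_ιMulti]
      exact h a _ ha ha1 (fun i => ⟨v i, hv i, rfl⟩))

lemma Klift_sym {N : Type u} [AddCommGroup N] [Module ℚ N] {n : ℕ}
    (φ : (UnitsQ F) [⋀^Fin n]→ₗ[ℚ] N) (h : StAlt n φ) (v : Fin n → UnitsQ F) :
    Klift φ h (sym F n v) = φ v := by
  have : Klift φ h (sym F n v) =
    exteriorPower.alternatingMapLinearEquiv φ (exteriorPower.ιMulti ℚ n v) := rfl
  rw [this, exteriorPower.alternatingMapLinearEquiv_apply_ιMulti]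

lemma sym_steinberg' {m : ℕ} (a : F) (v : Fin m → UnitsQ F) (ha : a ≠ 0) (ha1 : a ≠ 1)
    (hv : ∀ i, ∃ x : F, x ≠ 0 ∧ v i = mkQ x) :
    sym F (m + 2) (Fin.cons (mkQ a) (Fin.cons (mkQ (1 - a)) v)) = 0 := by
  choose w hw hw' using hv
  have : v = fun i => mkQ (w i) := funext hw'
  subst this
  rw [← cons2]
  refine (Submodule.Quotient.mk_eq_zero _).2 ?_
  exact Submodule.subset_span ⟨a, w, ha, ha1, hw, rfl⟩

lemma alt_swap {M N : Type u} [AddCommGroup M] [Module ℚ M] [AddCommGroup N] [Module ℚ N] {n : ℕ}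
    (φ : M [⋀^Fin (n + 2)]→ₗ[ℚ] N) (a b : M) (v : Fin n → M) :
    φ (Fin.cons a (Fin.cons b v)) = - φ (Fin.cons b (Fin.cons a v)) := by
  have h := φ.map_swap (Fin.cons b (Fin.cons a v)) (i := 0) (j := 1) (by simp)
  rw [← h]
  congr 1
  funext i
  refine Fin.cases ?_ (fun i => ?_) i
  · simp
  · refine Fin.cases ?_ (fun i => ?_) i
    · simp
    · have h1 : (i.succ.succ : Fin (n + 2)) ≠ 0 := Fin.succ_ne_zero _
      have h2 : (i.succ.succ : Fin (n + 2)) ≠ 1 := by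
        intro h
        exact Fin.succ_ne_zero _ (Fin.succ_injective _ h)
      rw [Function.comp_apply, Equiv.swap_apply_of_ne_of_ne h1 h2]
      simp

lemma curry_StAlt (n : ℕ) (u : UnitsQ F) : StAlt n ((sym F (n + 1)).curryLeft u) := by
  match n with
  | 0 => trivial
  | 1 => trivial
  | (m + 2) =>
    intro a v ha ha1 hv
    have h0 : ∀ w : UnitsQ F, (sym F (m + 3)).curryLeft w
        (Fin.cons (mkQ a) (Fin.cons (mkQ (1 - a)) v)) =
        sym F (m + 3) (Fin.cons w (Fin.cons (mkQ a) (Fin.cons (mkQ (1 - a)) v))) := fun w => rfl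
    have h1 : ∀ x : F, x ≠ 0 → (sym F (m + 3)).curryLeft (mkQ x)
        (Fin.cons (mkQ a) (Fin.cons (mkQ (1 - a)) v)) = 0 := by
      intro x hx
      rw [h0, alt_swap]
      have : sym F (m + 3) (Fin.cons (mkQ a) (Fin.cons (mkQ x) (Fin.cons (mkQ (1 - a)) v))) =
          (sym F (m + 3)).curryLeft (mkQ a) (Fin.cons (mkQ x) (Fin.cons (mkQ (1 - a)) v)) := rfl
      rw [this, alt_swap]
      have : (sym F (m + 3)).curryLeft (mkQ a) (Fin.cons (mkQ (1 - a)) (Fin.cons (mkQ x) v)) =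
        sym F (m + 3) (Fin.cons (mkQ a) (Fin.cons (mkQ (1 - a)) (Fin.cons (mkQ x) v))) := rfl
      rw [this, neg_neg]
      apply sym_steinberg' a _ ha ha1
      intro i
      refine Fin.cases ⟨x, hx, rfl⟩ (fun i => ?_) i
      simpa using hv i
    have hu : u ∈ Submodule.span ℚ {u : UnitsQ F | ∃ x : F, x ≠ 0 ∧ u = mkQ x} := by
      rw [span_mkQ]; trivial
    refine Submodule.span_induction (p := fun w _ => (sym F (m + 3)).curryLeft w
        (Fin.cons (mkQ a) (Fin.cons (mkQ (1 - a)) v)) = 0) ?_ ?_ ?_ ?_ hu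
    · rintro _ ⟨x, hx, rfl⟩
      exact h1 x hx
    · rw [map_zero]; rfl
    · intro x y _ _ hx hy
      rw [map_add, AlternatingMap.add_apply, hx, hy, add_zero]
    · intro c x _ hx
      rw [map_smul, AlternatingMap.smul_apply, hx, smul_zero]

/-- Left multiplication by a symbol of degree one. -/
def lm {n : ℕ} : UnitsQ F →ₗ[ℚ] MilnorQ F n →ₗ[ℚ] MilnorQ F (n + 1) where
  toFun u := Klift ((sym F (n + 1)).curryLeft u) (curry_StAlt n u)
  map_add' u v := by
    apply K_ext
    intro w
    rw [LinearMap.add_apply, Klift_sym, Klift_sym, Klift_sym, map_add, AlternatingMap.add_apply]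
  map_smul' c v := by
    apply K_ext
    intro w
    rw [RingHom.id_apply, LinearMap.smul_apply, Klift_sym, Klift_sym, map_smul,
      AlternatingMap.smul_apply]

lemma lm_sym {n : ℕ} (u : UnitsQ F) (v : Fin n → UnitsQ F) :
    lm u (sym F n v) = sym F (n + 1) (Fin.cons u v) :=
  Klift_sym _ (curry_StAlt n u) _

lemma sym_succ {n : ℕ} (v : Fin (n + 1) → UnitsQ F) :
    sym F (n + 1) v = lm (v 0) (sym F n (Fin.tail v)) := by
  rw [lm_sym, Fin.cons_self_tail]

lemma lm_swap {n : ℕ} (u v : UnitsQ F) (x : MilnorQ F n) : lm u (lm v x) = - lm v (lm u x) := by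
  have : (lm u).comp (lm v) = - (lm v).comp (lm (n := n) u) := by
    apply K_ext
    intro w
    simp only [LinearMap.comp_apply, LinearMap.neg_apply, lm_sym]
    exact alt_swap _ _ _ _
  exact LinearMap.congr_fun this x

lemma lm_self {n : ℕ} (u : UnitsQ F) (x : MilnorQ F n) : lm u (lm u x) = 0 := by
  have h := lm_swap u u x
  rw [eq_neg_iff_add_eq_zero, ← two_smul ℚ] at h
  simpa using h

lemma lm_steinberg {n : ℕ} {a b : F} (ha : a ≠ 0) (hb : b ≠ 0) (hab : a + b = 1)
    (x : MilnorQ F n) : lm (mkQ a) (lm (mkQ b) x) = 0 := by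
  have ha1 : a ≠ 1 := by rintro rfl; exact hb (by simpa using hab)
  obtain rfl : b = 1 - a := by rw [← hab]; ring
  have : (lm (mkQ a)).comp (lm (n := n) (mkQ (1 - a))) = 0 := by
    apply LinearMap.ext_on (sym_span n)
    rintro _ ⟨v, hv, rfl⟩
    simp only [LinearMap.comp_apply, LinearMap.zero_apply, lm_sym]
    exact sym_steinberg' a _ ha ha1 (fun i => ⟨v i, hv i, rfl⟩)
  exact LinearMap.congr_fun this x

/-- `K_{n+1}` is spanned by products. -/
lemma lm_span (n : ℕ) (S : Set (UnitsQ F)) (hS : Submodule.span ℚ S = ⊤) : Submodule.span ℚ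
    {y : MilnorQ F (n + 1) | ∃ u ∈ S, ∃ x : MilnorQ F n, y = lm u x} = ⊤ := by
  rw [eq_top_iff, ← sym_span, Submodule.span_le]
  rintro _ ⟨v, hv, rfl⟩
  rw [sym_succ]
  have : mkQ (v 0) ∈ Submodule.span ℚ S := by rw [hS]; trivial
  generalize mkQ (v 0) = w at this ⊢
  refine Submodule.span_induction (p := fun w _ => lm w _ ∈ Submodule.span ℚ
    {y : MilnorQ F (n + 1) | ∃ u ∈ S, ∃ x : MilnorQ F n, y = lm u x}) ?_ ?_ ?_ ?_ this
  · intro u hu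
    exact Submodule.subset_span ⟨u, hu, _, rfl⟩
  · rw [map_zero, LinearMap.zero_apply]; exact Submodule.zero_mem _
  · intro x y _ _ hx hy
    rw [map_add, LinearMap.add_apply]; exact Submodule.add_mem _ hx hy
  · intro c x _ hx
    rw [map_smul, LinearMap.smul_apply]; exact Submodule.smul_mem _ _ hx

lemma lm_ext {n : ℕ} {N : Type u} [AddCommGroup N] [Module ℚ N]
    {f g : MilnorQ F (n + 1) →ₗ[ℚ] N}
    (h : ∀ (u : UnitsQ F) (x : MilnorQ F n), f (lm u x) = g (lm u x)) : f = g := by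
  apply LinearMap.ext_on (lm_span n Set.univ (by simp))
  rintro _ ⟨u, -, x, rfl⟩
  exact h u x

lemma K0_ext {N : Type u} [AddCommGroup N] [Module ℚ N]
    {f g : MilnorQ F 0 →ₗ[ℚ] N} (v : Fin 0 → UnitsQ F)
    (h : f (sym F 0 v) = g (sym F 0 v)) : f = g := by
  apply K_ext
  intro w
  rw [Subsingleton.elim w v]
  exact h

end sym

/-! ### Functoriality, specialization, and residues -/

section maps
variable {E k : Type u} [Field E] [Field k]

/-- linear maps on units compatible with Steinberg relations -/
def StC (s : UnitsQ E →ₗ[ℚ] UnitsQ k) : Prop :=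
  ∀ a b : E, a ≠ 0 → b ≠ 0 → a + b = 1 → ∀ (m : ℕ) (x : MilnorQ k m),
    lm (s (mkQ a)) (lm (s (mkQ b)) x) = 0

lemma StC_map (j : E →+* k) : StC (unitsQMap j) := by
  intro a b ha hb hab m x
  rw [unitsQMap_mkQ, unitsQMap_mkQ]
  exact lm_steinberg (by simpa using ha) (by simpa using hb) (by rw [← map_add, hab, map_one]) _

/-- The map on Milnor K-groups. -/
def KM {s : UnitsQ E →ₗ[ℚ] UnitsQ k} (hs : StC s) (n : ℕ) : MilnorQ E n →ₗ[ℚ] MilnorQ k n :=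
  Klift ((sym k n).compLinearMap s) (by
    match n with
    | 0 => trivial
    | 1 => trivial
    | (m + 2) =>
      intro a v ha ha1 hv
      rw [AlternatingMap.compLinearMap_apply, sym_succ, sym_succ]
      exact hs a (1 - a) ha (sub_ne_zero.2 ha1.symm) (by ring) _ _)

lemma KM_sym {s : UnitsQ E →ₗ[ℚ] UnitsQ k} (hs : StC s) {n : ℕ} (v : Fin n → UnitsQ E) :
    KM hs n (sym E n v) = sym k n (fun i => s (v i)) := Klift_sym _ _ _

lemma KM_lm {s : UnitsQ E →ₗ[ℚ] UnitsQ k} (hs : StC s) {n : ℕ} (u : UnitsQ E) (x : MilnorQ E n) :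
    KM hs (n + 1) (lm u x) = lm (s u) (KM hs n x) := by
  have : (KM hs (n + 1)).comp (lm u) = (lm (s u)).comp (KM hs n) := by
    apply K_ext
    intro w
    simp only [LinearMap.comp_apply, lm_sym, KM_sym]
    congr 1
    funext i
    refine Fin.cases rfl (fun i => rfl) i
  exact LinearMap.congr_fun this x

/-- the conditions for the pair (valuation, specialization) -/
structure TameD (v : UnitsQ E →ₗ[ℚ] ℚ) (s : UnitsQ E →ₗ[ℚ] UnitsQ k) : Prop where
  st : StC s
  vs : ∀ a b : E, a ≠ 0 → b ≠ 0 → a + b = 1 → v (mkQ a) • s (mkQ b) = v (mkQ b) • s (mkQ a)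

/-- The residue as an alternating map. -/
def resAlt (v : UnitsQ E →ₗ[ℚ] ℚ) (s : UnitsQ E →ₗ[ℚ] UnitsQ k) (n : ℕ) :
    (UnitsQ E) [⋀^Fin (n + 1)]→ₗ[ℚ] MilnorQ k n :=
  AlternatingMap.alternatizeUncurryFin (v.smulRight ((sym k n).compLinearMap s))

lemma resAlt_zero (v : UnitsQ E →ₗ[ℚ] ℚ) (s : UnitsQ E →ₗ[ℚ] UnitsQ k)
    (w : Fin 1 → UnitsQ E) :
    resAlt v s 0 w = v (w 0) • sym k 0 (fun i => s (w i.succ)) := by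
  rw [resAlt, AlternatingMap.alternatizeUncurryFin_apply]
  simp
  rfl

lemma resAlt_succ (v : UnitsQ E →ₗ[ℚ] ℚ) (s : UnitsQ E →ₗ[ℚ] UnitsQ k) {n : ℕ}
    (u : UnitsQ E) (w : Fin (n + 1) → UnitsQ E) :
    resAlt v s (n + 1) (Fin.cons u w) =
      v u • sym k (n + 1) (fun i => s (w i)) - lm (s u) (resAlt v s n w) := by
  rw [resAlt, AlternatingMap.alternatizeUncurryFin_apply, Fin.sum_univ_succ]
  rw [sub_eq_add_neg]
  congr 1
  · simp
  · rw [resAlt, AlternatingMap.alternatizeUncurryFin_apply, map_sum, ← Finset.sum_neg_distrib]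
    apply Finset.sum_congr rfl
    intro i _
    simp only [Fin.cons_succ, LinearMap.smulRight_apply, AlternatingMap.smul_apply,
      AlternatingMap.compLinearMap_apply, map_zsmul, map_smul, lm_sym, Fin.val_succ, pow_succ]
    rw [mul_neg_one, neg_smul]
    congr 4
    funext l
    refine Fin.cases ?_ (fun l => ?_) l
    · simp [Fin.removeNth]
    · simp [Fin.removeNth]

/-- The residue map. -/
def res {v : UnitsQ E →ₗ[ℚ] ℚ} {s : UnitsQ E →ₗ[ℚ] UnitsQ k} (h : TameD v s) (n : ℕ) :
    MilnorQ E (n + 1) →ₗ[ℚ] MilnorQ k n :=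
  Klift (resAlt v s n) (by
    match n with
    | 0 => trivial
    | (m + 1) =>
      intro a w ha ha1 hw
      have hb : (1 - a) ≠ 0 := sub_ne_zero.2 ha1.symm
      have hab : a + (1 - a) = 1 := by ring
      rw [resAlt_succ, sym_succ]
      match m with
      | 0 =>
        rw [resAlt_zero, map_smul]
        simp only [Fin.cons_zero]
        rw [← LinearMap.smul_apply, ← map_smul, h.vs a (1 - a) ha hb hab, map_smul,
          LinearMap.smul_apply]
        rw [sub_eq_zero]
        rfl
      | (m + 1) =>
        rw [resAlt_succ, map_sub, h.st a (1 - a) ha hb hab, map_smul, sub_zero]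
        simp only [Fin.cons_zero]
        rw [← LinearMap.smul_apply, ← map_smul, h.vs a (1 - a) ha hb hab, map_smul,
          LinearMap.smul_apply]
        rw [sub_eq_zero]
        rfl)

lemma res_zero {v : UnitsQ E →ₗ[ℚ] ℚ} {s : UnitsQ E →ₗ[ℚ] UnitsQ k} (h : TameD v s)
    (u : UnitsQ E) (x : MilnorQ E 0) :
    res h 0 (lm u x) = v u • KM h.st 0 x := by
  have : (res h 0).comp (lm u) = v u • KM h.st 0 := by
    apply K_ext
    intro w
    simp only [LinearMap.comp_apply, LinearMap.smul_apply, lm_sym, KM_sym]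
    refine (Klift_sym _ _ _).trans ?_
    rw [resAlt_zero]
    rfl
  exact LinearMap.congr_fun this x

lemma res_succ {v : UnitsQ E →ₗ[ℚ] ℚ} {s : UnitsQ E →ₗ[ℚ] UnitsQ k} (h : TameD v s)
    {n : ℕ} (u : UnitsQ E) (x : MilnorQ E (n + 1)) :
    res h (n + 1) (lm u x) = v u • KM h.st (n + 1) x - lm (s u) (res h n x) := by
  have : (res h (n + 1)).comp (lm u) = v u • KM h.st (n + 1) - (lm (s u)).comp (res h n) := by
    apply K_ext
    intro w
    simp only [LinearMap.comp_apply, LinearMap.smul_apply, lm_sym, KM_sym, LinearMap.sub_apply]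
    refine (Klift_sym _ _ _).trans ?_
    rw [resAlt_succ]
    rw [res, Klift_sym]
  exact LinearMap.congr_fun this x

end maps

end MK

end MKpart1

noncomputable section MKpart2

namespace MK

open Polynomial

section compat
variable {E E₁ E₂ k k' : Type u} [Field E] [Field E₁] [Field E₂] [Field k] [Field k']

lemma KM_comp {s₁ : UnitsQ E →ₗ[ℚ] UnitsQ k} (h₁ : StC s₁) {s₂ : UnitsQ k →ₗ[ℚ] UnitsQ k'}
    (h₂ : StC s₂) {s₃ : UnitsQ E →ₗ[ℚ] UnitsQ k'} (h₃ : StC s₃)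
    (h : ∀ u, s₂ (s₁ u) = s₃ u) (n : ℕ) (x : MilnorQ E n) :
    KM h₂ n (KM h₁ n x) = KM h₃ n x := by
  have : (KM h₂ n).comp (KM h₁ n) = KM h₃ n := by
    apply K_ext
    intro w
    simp only [LinearMap.comp_apply, KM_sym, h]
  exact LinearMap.congr_fun this x

lemma KM_id {s : UnitsQ E →ₗ[ℚ] UnitsQ E} (hs : StC s) (h : ∀ u, s u = u) (n : ℕ)
    (x : MilnorQ E n) : KM hs n x = x := by
  have : KM hs n = LinearMap.id := by
    apply K_ext
    intro w
    simp only [LinearMap.id_apply, KM_sym, h]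
  exact LinearMap.congr_fun this x

lemma KM_res {v : UnitsQ E →ₗ[ℚ] ℚ} {s : UnitsQ E →ₗ[ℚ] UnitsQ k} (h : TameD v s)
    {i : UnitsQ k →ₗ[ℚ] UnitsQ k'} (hi : StC i)
    {v' : UnitsQ E →ₗ[ℚ] ℚ} {s' : UnitsQ E →ₗ[ℚ] UnitsQ k'} (h' : TameD v' s')
    (hv : ∀ u, v' u = v u) (hs : ∀ u, i (s u) = s' u) (n : ℕ) (x : MilnorQ E (n + 1)) :
    KM hi n (res h n x) = res h' n x := by
  have : (KM hi n).comp (res h n) = res h' n := by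
    induction n with
    | zero =>
      apply lm_ext
      intro u x
      simp only [LinearMap.comp_apply, res_zero, map_smul, hv, KM_comp h.st hi h'.st hs]
    | succ n ih =>
      apply lm_ext
      intro u y
      have := LinearMap.congr_fun (ih (res h n y |> fun _ => y)) y
      simp only [LinearMap.comp_apply] at this
      simp only [LinearMap.comp_apply, res_succ, map_sub, map_smul, hv, KM_comp h.st hi h'.st hs,
        KM_lm, this, hs]
  exact LinearMap.congr_fun this x

section
variable {t : UnitsQ E₁ →ₗ[ℚ] UnitsQ E₂} (ht : StC t)
    {v₁ : UnitsQ E₁ →ₗ[ℚ] ℚ} {s₁ : UnitsQ E₁ →ₗ[ℚ] UnitsQ k} (h₁ : TameD v₁ s₁)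
    {v₂ : UnitsQ E₂ →ₗ[ℚ] ℚ} {s₂ : UnitsQ E₂ →ₗ[ℚ] UnitsQ k} (h₂ : TameD v₂ s₂)

lemma compat0 (x : MilnorQ E₁ 0) :
    KM h₂.st 0 (KM ht 0 x) = KM h₁.st 0 x := by
  have : (KM h₂.st 0).comp (KM ht 0) = KM h₁.st 0 := by
    apply K_ext
    intro w
    simp only [LinearMap.comp_apply, KM_sym]
    congr 1
    funext i
    exact i.elim0
  exact LinearMap.congr_fun this x

lemma compat1 (e : ℚ) (w : UnitsQ k) (_hv : ∀ u, v₂ (t u) = e * v₁ u)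
    (hs : ∀ u, s₂ (t u) = s₁ u + v₁ u • w)
    (n : ℕ) : ∀ (x : MilnorQ E₁ (n + 1)),
    KM h₂.st (n + 1) (KM ht (n + 1) x) = KM h₁.st (n + 1) x + lm w (res h₁ n x) := by
  induction n with
  | zero =>
    intro x
    have : (KM h₂.st 1).comp (KM ht 1) = KM h₁.st 1 + (lm w).comp (res h₁ 0) := by
      apply lm_ext
      intro u y
      simp only [LinearMap.comp_apply, LinearMap.add_apply, KM_lm, res_zero, hs,
        compat0 ht h₁ h₂, map_add, map_smul, LinearMap.smul_apply]
    exact LinearMap.congr_fun this x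
  | succ n ih =>
    intro x
    have : (KM h₂.st (n + 2)).comp (KM ht (n + 2)) =
        KM h₁.st (n + 2) + (lm w).comp (res h₁ (n + 1)) := by
      apply lm_ext
      intro u y
      simp only [LinearMap.comp_apply, LinearMap.add_apply, KM_lm, res_succ, hs, ih,
        map_add, map_smul, LinearMap.smul_apply, map_sub, lm_self]
      rw [lm_swap w (s₁ u)]
      simp only [smul_zero, add_zero, sub_neg_eq_add]
      abel
    exact LinearMap.congr_fun this x

lemma compat2 (e : ℚ) (w : UnitsQ k) (hv : ∀ u, v₂ (t u) = e * v₁ u)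
    (hs : ∀ u, s₂ (t u) = s₁ u + v₁ u • w)
    (n : ℕ) : ∀ (x : MilnorQ E₁ (n + 1)),
    res h₂ n (KM ht (n + 1) x) = e • res h₁ n x := by
  induction n with
  | zero =>
    intro x
    have : (res h₂ 0).comp (KM ht 1) = e • res h₁ 0 := by
      apply lm_ext
      intro u y
      simp only [LinearMap.comp_apply, LinearMap.smul_apply, KM_lm, res_zero, hv,
        compat0 ht h₁ h₂, mul_smul]
    exact LinearMap.congr_fun this x
  | succ n ih =>
    intro x
    have : (res h₂ (n + 1)).comp (KM ht (n + 2)) = e • res h₁ (n + 1) := by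
      apply lm_ext
      intro u y
      simp only [LinearMap.comp_apply, LinearMap.smul_apply, KM_lm, res_succ, hv, hs, ih,
        compat1 ht h₁ h₂ e w hv hs, mul_smul, map_add, map_smul, LinearMap.add_apply,
        smul_add, smul_sub]
      abel
    exact LinearMap.congr_fun this x
end

end compat

/-! ### Rational functions -/

section ratfunc
variable {F : Type u} [Field F]

/-- class of a polynomial -/
def pm (p : F[X]) : UnitsQ (RatFunc F) := mkQ (algebraMap F[X] (RatFunc F) p)

lemma aM_ne {p : F[X]} (hp : p ≠ 0) : algebraMap F[X] (RatFunc F) p ≠ 0 :=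
  RatFunc.algebraMap_ne_zero hp

lemma pm_mul {p q : F[X]} (hp : p ≠ 0) (hq : q ≠ 0) : pm (p * q) = pm p + pm q := by
  rw [pm, map_mul, mkQ_mul (aM_ne hp) (aM_ne hq)]; rfl

lemma mkQ_rat {x : RatFunc F} (hx : x ≠ 0) : mkQ x = pm x.num - pm x.denom := by
  conv_lhs => rw [← RatFunc.num_div_denom x]
  rw [mkQ_div (aM_ne (RatFunc.num_ne_zero hx)) (aM_ne (RatFunc.denom_ne_zero x))]
  rfl

lemma span_pm : Submodule.span ℚ {u : UnitsQ (RatFunc F) | ∃ p : F[X], p ≠ 0 ∧ u = pm p} = ⊤ := by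
  rw [eq_top_iff, ← span_mkQ, Submodule.span_le]
  rintro _ ⟨x, hx, rfl⟩
  rw [mkQ_rat hx]
  exact Submodule.sub_mem _ (Submodule.subset_span ⟨_, RatFunc.num_ne_zero hx, rfl⟩)
    (Submodule.subset_span ⟨_, RatFunc.denom_ne_zero x, rfl⟩)

lemma lin_pm_ext {M : Type*} [AddCommGroup M] [Module ℚ M] {f g : UnitsQ (RatFunc F) →ₗ[ℚ] M}
    (h : ∀ p : F[X], p ≠ 0 → f (pm p) = g (pm p)) : f = g := by
  apply LinearMap.ext_on span_pm
  rintro _ ⟨x, hx, rfl⟩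
  exact h x hx

/-- linear maps from multiplicative functions on polynomials -/
def liftP {M : Type*} [AddCommGroup M] [Module ℚ M] (φ : F[X] → M)
    (hφ : ∀ p q, p ≠ 0 → q ≠ 0 → φ (p * q) = φ p + φ q) : UnitsQ (RatFunc F) →ₗ[ℚ] M :=
  liftQ (fun x => φ x.num - φ x.denom) (by
    intro x y hx hy
    have hnx := RatFunc.num_ne_zero hx
    have hny := RatFunc.num_ne_zero hy
    have hnxy := RatFunc.num_ne_zero (mul_ne_zero hx hy)
    have dx := RatFunc.denom_ne_zero x
    have dy := RatFunc.denom_ne_zero y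
    have dxy := RatFunc.denom_ne_zero (x * y)
    have h := RatFunc.num_denom_mul x y
    have h2 := congrArg φ h
    rw [hφ _ _ hnxy (mul_ne_zero dx dy), hφ _ _ dx dy, hφ _ _ (mul_ne_zero hnx hny) dxy,
      hφ _ _ hnx hny] at h2
    have : φ (x * y).num = φ x.num + φ y.num + φ (x * y).denom - (φ x.denom + φ y.denom) := by
      rw [← h2]; abel
    simp only [this]
    abel)

lemma liftP_pm {M : Type*} [AddCommGroup M] [Module ℚ M] (φ : F[X] → M)
    (hφ : ∀ p q, p ≠ 0 → q ≠ 0 → φ (p * q) = φ p + φ q) {p : F[X]} (hp : p ≠ 0) :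
    liftP φ hφ (pm p) = φ p := by
  rw [liftP, pm, liftQ_mkQ _ _ (aM_ne hp)]
  have h := RatFunc.num_div_denom (algebraMap F[X] (RatFunc F) p)
  rw [div_eq_iff (aM_ne (RatFunc.denom_ne_zero _)), ← map_mul] at h
  have h := RatFunc.algebraMap_injective F h
  have h2 := congrArg φ h
  rw [hφ _ _ hp (RatFunc.denom_ne_zero _)] at h2
  rw [h2]; abel

lemma tameD_of_poly {k : Type u} [Field k] {v : UnitsQ (RatFunc F) →ₗ[ℚ] ℚ}
    {s : UnitsQ (RatFunc F) →ₗ[ℚ] UnitsQ k}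
    (H : ∀ p q r : F[X], p ≠ 0 → q ≠ 0 → r ≠ 0 → p + q = r →
      ((v (pm p) - v (pm r)) • (s (pm q) - s (pm r)) =
        (v (pm q) - v (pm r)) • (s (pm p) - s (pm r)) ∧
      ∀ (m : ℕ) (x : MilnorQ k m), lm (s (pm p) - s (pm r)) (lm (s (pm q) - s (pm r)) x) = 0)) :
    TameD v s := by
  have key : ∀ a b : RatFunc F, a ≠ 0 → b ≠ 0 → a + b = 1 → ∃ p q r : F[X],
      p ≠ 0 ∧ q ≠ 0 ∧ r ≠ 0 ∧ p + q = r ∧ mkQ a = pm p - pm r ∧ mkQ b = pm q - pm r := by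
    intro a b ha hb hab
    have hd := RatFunc.denom_ne_zero a
    have hb' : b = algebraMap F[X] (RatFunc F) (a.denom - a.num) /
        algebraMap F[X] (RatFunc F) a.denom := by
      rw [map_sub, sub_div, div_self (aM_ne hd), RatFunc.num_div_denom, ← hab]
      ring
    have hne : a.denom - a.num ≠ 0 := by
      intro h
      rw [h] at hb'
      simp at hb'
      exact hb hb'
    refine ⟨a.num, a.denom - a.num, a.denom, RatFunc.num_ne_zero ha, hne, hd, by ring,
      mkQ_rat ha, ?_⟩
    conv_lhs => rw [hb']
    rw [mkQ_div (aM_ne hne) (aM_ne hd)]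
    rfl
  constructor
  · intro a b ha hb hab m x
    obtain ⟨p, q, r, hp, hq, hr, hpq, h1, h2⟩ := key a b ha hb hab
    rw [h1, h2, map_sub s, map_sub s]
    exact (H p q r hp hq hr hpq).2 m x
  · intro a b ha hb hab
    obtain ⟨p, q, r, hp, hq, hr, hpq, h1, h2⟩ := key a b ha hb hab
    rw [h1, h2, map_sub, map_sub, map_sub, map_sub]
    exact (H p q r hp hq hr hpq).1

/-! #### The place at infinity -/

/-- valuation at infinity -/
def vInf (F : Type u) [Field F] : UnitsQ (RatFunc F) →ₗ[ℚ] ℚ :=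
  liftP (fun p => -(p.natDegree : ℚ)) (by
    intro p q hp hq
    simp only [natDegree_mul hp hq]; push_cast; ring)

/-- leading coefficient -/
def sInf (F : Type u) [Field F] : UnitsQ (RatFunc F) →ₗ[ℚ] UnitsQ F :=
  liftP (fun p => mkQ p.leadingCoeff) (by
    intro p q hp hq
    simp only [leadingCoeff_mul]
    rw [mkQ_mul (leadingCoeff_ne_zero.2 hp) (leadingCoeff_ne_zero.2 hq)])

lemma vInf_pm {p : F[X]} (hp : p ≠ 0) : vInf F (pm p) = -(p.natDegree : ℚ) := liftP_pm _ _ hp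
lemma sInf_pm {p : F[X]} (hp : p ≠ 0) : sInf F (pm p) = mkQ p.leadingCoeff := liftP_pm _ _ hp

lemma tInf (F : Type u) [Field F] : TameD (vInf F) (sInf F) := by
  apply tameD_of_poly
  intro p q r hp hq hr hpq
  rw [vInf_pm hp, vInf_pm hq, vInf_pm hr, sInf_pm hp, sInf_pm hq, sInf_pm hr]
  have lp := leadingCoeff_ne_zero.2 hp
  have lq := leadingCoeff_ne_zero.2 hq
  have lr := leadingCoeff_ne_zero.2 hr
  rcases lt_trichotomy p.natDegree q.natDegree with h | h | h
  · have h1 : r.natDegree = q.natDegree := by rw [← hpq, natDegree_add_eq_right_of_natDegree_lt h]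
    have h2 : r.leadingCoeff = q.leadingCoeff := by
      rw [← hpq, leadingCoeff_add_of_degree_lt (degree_lt_degree h)]
    rw [h1, h2]
    simp
  · have hc : r.coeff p.natDegree = p.leadingCoeff + q.leadingCoeff := by
      rw [← hpq, coeff_add, leadingCoeff, leadingCoeff, h]
    have hle : r.natDegree ≤ p.natDegree := by
      rw [← hpq]; exact (natDegree_add_le _ _).trans (by rw [h, max_self])
    by_cases h0 : p.leadingCoeff + q.leadingCoeff = 0
    · have : q.leadingCoeff = - p.leadingCoeff := by linear_combination h0
      rw [this, mkQ_neg, h]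
      exact ⟨rfl, fun m x => lm_self _ _⟩
    · have h1 : r.natDegree = p.natDegree :=
        le_antisymm hle (le_natDegree_of_ne_zero (by rw [hc]; exact h0))
      have h2 : r.leadingCoeff = p.leadingCoeff + q.leadingCoeff := by
        rw [leadingCoeff, h1, hc]
      refine ⟨by rw [h1, h]; simp, ?_⟩
      intro m x
      rw [← mkQ_div lp lr, ← mkQ_div lq lr]
      apply lm_steinberg (div_ne_zero lp lr) (div_ne_zero lq lr)
      rw [← add_div, h2, div_self h0]
  · have h1 : r.natDegree = p.natDegree := by rw [← hpq, natDegree_add_eq_left_of_natDegree_lt h]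
    have h2 : r.leadingCoeff = p.leadingCoeff := by
      rw [← hpq, leadingCoeff_add_of_degree_lt' (degree_lt_degree h)]
    rw [h1, h2]
    simp

end ratfunc

/-! #### Finite places -/

section finite
variable {F k : Type u} [Field F] [Field k] [Algebra F k]

lemma exists_fac {θ : k} (hθ : IsIntegral F θ) {f : F[X]} (hf : f ≠ 0) :
    ∃ (m : ℕ) (g : F[X]), f = minpoly F θ ^ m * g ∧ aeval θ g ≠ 0 := by
  have hfin : FiniteMultiplicity (minpoly F θ) f :=
    FiniteMultiplicity.of_prime_left (minpoly.prime hθ) hf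
  obtain ⟨g, hg, hg'⟩ := hfin.exists_eq_pow_mul_and_not_dvd
  refine ⟨_, g, hg, ?_⟩
  intro h
  exact hg' (minpoly.dvd F θ h)

lemma fac_unique {θ : k} (hθ : IsIntegral F θ) {m m' : ℕ} {g g' : F[X]}
    (h : minpoly F θ ^ m * g = minpoly F θ ^ m' * g') (hg : aeval θ g ≠ 0)
    (hg' : aeval θ g' ≠ 0) : m = m' ∧ g = g' := by
  have h0 := minpoly.ne_zero hθ
  have ha := minpoly.aeval F θ
  wlog hle : m ≤ m' generalizing m m' g g'
  · obtain ⟨h1, h2⟩ := this h.symm hg' hg (le_of_not_ge hle)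
    exact ⟨h1.symm, h2.symm⟩
  obtain ⟨c, rfl⟩ := Nat.exists_eq_add_of_le hle
  rw [pow_add, mul_assoc] at h
  have h := mul_left_cancel₀ (pow_ne_zero _ h0) h
  cases c with
  | zero => simpa using h
  | succ c =>
    exfalso
    apply hg
    rw [h, pow_succ]
    simp [ha]

open Classical in
/-- order at a place -/
def ordP (θ : k) (f : F[X]) : ℕ :=
  if h : ∃ (m : ℕ) (g : F[X]), f = minpoly F θ ^ m * g ∧ aeval θ g ≠ 0 then h.choose else 0

open Classical in
/-- unit part at a place -/
def unP (θ : k) (f : F[X]) : F[X] :=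
  if h : ∃ (m : ℕ) (g : F[X]), f = minpoly F θ ^ m * g ∧ aeval θ g ≠ 0
    then h.choose_spec.choose else 0

lemma ord_un {θ : k} (hθ : IsIntegral F θ) {f : F[X]} (hf : f ≠ 0) :
    f = minpoly F θ ^ (ordP θ f) * unP θ f ∧ aeval θ (unP θ f) ≠ 0 := by
  have h := exists_fac hθ hf
  rw [ordP, unP, dif_pos h, dif_pos h]
  exact h.choose_spec.choose_spec

lemma ord_un_eq {θ : k} (hθ : IsIntegral F θ) {m : ℕ} {g : F[X]} (hg : aeval θ g ≠ 0) :
    ordP θ (minpoly F θ ^ m * g) = m ∧ unP θ (minpoly F θ ^ m * g) = g := by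
  have hg0 : g ≠ 0 := by rintro rfl; simp at hg
  have h := ord_un hθ (mul_ne_zero (pow_ne_zero m (minpoly.ne_zero hθ)) hg0)
  obtain ⟨h1, h2⟩ := fac_unique hθ h.1 hg h.2
  exact ⟨h1.symm, h2.symm⟩

lemma ord_un_mul {θ : k} (hθ : IsIntegral F θ) {f g : F[X]} (hf : f ≠ 0) (hg : g ≠ 0) :
    ordP θ (f * g) = ordP θ f + ordP θ g ∧ unP θ (f * g) = unP θ f * unP θ g := by
  obtain ⟨h1, h1'⟩ := ord_un hθ hf
  obtain ⟨h2, h2'⟩ := ord_un hθ hg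
  have : f * g = minpoly F θ ^ (ordP θ f + ordP θ g) * (unP θ f * unP θ g) := by
    conv_lhs => rw [h1, h2]
    ring
  rw [this]
  exact ord_un_eq hθ (by rw [map_mul]; exact mul_ne_zero h1' h2')

/-- valuation at a finite place -/
def vP {θ : k} (hθ : IsIntegral F θ) : UnitsQ (RatFunc F) →ₗ[ℚ] ℚ :=
  liftP (fun p => (ordP θ p : ℚ)) (by
    intro p q hp hq
    simp only [(ord_un_mul hθ hp hq).1]; push_cast; ring)

/-- specialization at a finite place -/
def sP {θ : k} (hθ : IsIntegral F θ) : UnitsQ (RatFunc F) →ₗ[ℚ] UnitsQ k :=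
  liftP (fun p => mkQ (aeval θ (unP θ p))) (by
    intro p q hp hq
    simp only [(ord_un_mul hθ hp hq).2]
    rw [map_mul, mkQ_mul (ord_un hθ hp).2 (ord_un hθ hq).2])

lemma vP_fac {θ : k} (hθ : IsIntegral F θ) {m : ℕ} {g : F[X]} (hg : aeval θ g ≠ 0) :
    vP hθ (pm (minpoly F θ ^ m * g)) = m := by
  have hg0 : g ≠ 0 := by rintro rfl; simp at hg
  rw [vP, liftP_pm _ _ (mul_ne_zero (pow_ne_zero m (minpoly.ne_zero hθ)) hg0),
    (ord_un_eq hθ hg).1]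

lemma sP_fac {θ : k} (hθ : IsIntegral F θ) {m : ℕ} {g : F[X]} (hg : aeval θ g ≠ 0) :
    sP hθ (pm (minpoly F θ ^ m * g)) = mkQ (aeval θ g) := by
  have hg0 : g ≠ 0 := by rintro rfl; simp at hg
  rw [sP, liftP_pm _ _ (mul_ne_zero (pow_ne_zero m (minpoly.ne_zero hθ)) hg0),
    (ord_un_eq hθ hg).2]

lemma vP_unit {θ : k} (hθ : IsIntegral F θ) {g : F[X]} (hg : aeval θ g ≠ 0) :
    vP hθ (pm g) = 0 := by
  simpa using vP_fac hθ (m := 0) hg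

lemma sP_unit {θ : k} (hθ : IsIntegral F θ) {g : F[X]} (hg : aeval θ g ≠ 0) :
    sP hθ (pm g) = mkQ (aeval θ g) := by
  simpa using sP_fac hθ (m := 0) hg

lemma vP_self {θ : k} (hθ : IsIntegral F θ) : vP hθ (pm (minpoly F θ)) = 1 := by
  simpa using vP_fac hθ (m := 1) (g := 1) (by simp)

lemma sP_self {θ : k} (hθ : IsIntegral F θ) : sP hθ (pm (minpoly F θ)) = 0 := by
  have := sP_fac hθ (m := 1) (g := 1) (by simp)
  rw [map_one, mkQ_one] at this
  simpa using this

lemma tP_aux {θ : k} (hθ : IsIntegral F θ) {i j : ℕ} {p q : F[X]} (hp : aeval θ p ≠ 0)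
    (hq : aeval θ q ≠ 0) (hij : i < j) :
    vP hθ (pm (minpoly F θ ^ i * p + minpoly F θ ^ j * q)) = i ∧
    sP hθ (pm (minpoly F θ ^ i * p + minpoly F θ ^ j * q)) = mkQ (aeval θ p) := by
  obtain ⟨c, rfl⟩ := Nat.exists_eq_add_of_lt hij
  have : minpoly F θ ^ i * p + minpoly F θ ^ (i + c + 1) * q =
    minpoly F θ ^ i * (p + minpoly F θ * (minpoly F θ ^ c * q)) := by ring
  have h2 : aeval θ (p + minpoly F θ * (minpoly F θ ^ c * q)) = aeval θ p := by simp
  rw [this, vP_fac hθ (by rwa [h2]), sP_fac hθ (by rwa [h2]), h2]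
  simp

lemma tP {θ : k} (hθ : IsIntegral F θ) : TameD (vP hθ) (sP hθ) := by
  apply tameD_of_poly
  intro p q r hp hq hr hpq
  obtain ⟨i, p, rfl, hp'⟩ := exists_fac hθ hp
  obtain ⟨j, q, rfl, hq'⟩ := exists_fac hθ hq
  rcases lt_trichotomy i j with h | rfl | h
  · obtain ⟨h1, h2⟩ := tP_aux hθ hp' hq' h
    rw [hpq] at h1 h2
    rw [vP_fac hθ hp', sP_fac hθ hp', h1, h2]
    simp
  · rw [← mul_add] at hpq
    obtain ⟨l, r, rfl, hr'⟩ := exists_fac hθ hr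
    rw [vP_fac hθ hp', sP_fac hθ hp', vP_fac hθ hq', sP_fac hθ hq', vP_fac hθ hr', sP_fac hθ hr']
    refine ⟨?_, ?_⟩
    · by_cases h0 : aeval θ (p + q) = 0
      · rw [map_add] at h0
        have : aeval θ q = - aeval θ p := by linear_combination h0
        rw [this, mkQ_neg]
      · obtain ⟨h1, h2⟩ := fac_unique hθ hpq h0 hr'
        rw [h1]; simp
    · intro m x
      by_cases h0 : aeval θ (p + q) = 0
      · rw [map_add] at h0
        have : aeval θ q = - aeval θ p := by linear_combination h0
        rw [this, mkQ_neg, lm_self]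
      · obtain ⟨h1, h2⟩ := fac_unique hθ hpq h0 hr'
        rw [← mkQ_div hp' hr', ← mkQ_div hq' hr']
        apply lm_steinberg (div_ne_zero hp' hr') (div_ne_zero hq' hr')
        rw [← add_div, ← map_add, h2, div_self hr']
  · obtain ⟨h1, h2⟩ := tP_aux hθ hq' hp' h
    rw [add_comm, hpq] at h1 h2
    rw [vP_fac hθ hq', sP_fac hθ hq', h1, h2]
    simp

end finite

end MK

end MKpart2

noncomputable section MKpart3

namespace MK

open Polynomial

section filt
variable (F : Type u) [Field F]

/-- units of bounded degree -/
def U (e : ℕ) : Submodule ℚ (UnitsQ (RatFunc F)) :=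
  Submodule.span ℚ {u | ∃ p : F[X], p ≠ 0 ∧ p.natDegree ≤ e ∧ u = pm p}

/-- Milnor filtration -/
def L (e : ℕ) : (n : ℕ) → Submodule ℚ (MilnorQ (RatFunc F) n)
  | 0 => ⊤
  | (n + 1) => Submodule.map₂ lm (U F e) (L e n)

variable {F}

lemma pm_mem {e : ℕ} {p : F[X]} (hp : p ≠ 0) (hd : p.natDegree ≤ e) : pm p ∈ U F e :=
  Submodule.subset_span ⟨p, hp, hd, rfl⟩

lemma lm_mem {e n : ℕ} {u : UnitsQ (RatFunc F)} (hu : u ∈ U F e) {x : MilnorQ (RatFunc F) n}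
    (hx : x ∈ L F e n) : lm u x ∈ L F e (n + 1) := Submodule.apply_mem_map₂ _ hu hx

lemma U_mono {e e' : ℕ} (h : e ≤ e') : U F e ≤ U F e' := by
  apply Submodule.span_mono
  rintro _ ⟨p, hp, hd, rfl⟩
  exact ⟨p, hp, hd.trans h, rfl⟩

lemma L_mono {e e' : ℕ} (h : e ≤ e') (n : ℕ) : L F e n ≤ L F e' n := by
  induction n with
  | zero => exact le_rfl
  | succ n ih => exact Submodule.map₂_le_map₂ (U_mono h) ih

lemma U_exh (u : UnitsQ (RatFunc F)) : ∃ e, u ∈ U F e := by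
  have hu : u ∈ Submodule.span ℚ {u : UnitsQ (RatFunc F) | ∃ p : F[X], p ≠ 0 ∧ u = pm p} := by
    rw [span_pm]; trivial
  refine Submodule.span_induction (p := fun u _ => ∃ e, u ∈ U F e) ?_ ?_ ?_ ?_ hu
  · rintro _ ⟨p, hp, rfl⟩
    exact ⟨_, pm_mem hp le_rfl⟩
  · exact ⟨0, Submodule.zero_mem _⟩
  · rintro x y _ _ ⟨e, he⟩ ⟨e', he'⟩
    exact ⟨max e e', Submodule.add_mem _ (U_mono (le_max_left _ _) he)
      (U_mono (le_max_right _ _) he')⟩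
  · rintro c x _ ⟨e, he⟩
    exact ⟨e, Submodule.smul_mem _ _ he⟩

lemma L_exh (n : ℕ) : ∀ (x : MilnorQ (RatFunc F) n), ∃ e, x ∈ L F e n := by
  induction n with
  | zero => exact fun x => ⟨0, trivial⟩
  | succ n ih =>
    intro x
    have hx : x ∈ Submodule.span ℚ {y : MilnorQ (RatFunc F) (n + 1) | ∃ u ∈ Set.univ,
        ∃ x : MilnorQ (RatFunc F) n, y = lm u x} := by
      rw [lm_span n _ (by simp)]; trivial
    refine Submodule.span_induction (p := fun x _ => ∃ e, x ∈ L F e (n + 1)) ?_ ?_ ?_ ?_ hx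
    · rintro _ ⟨u, -, y, rfl⟩
      obtain ⟨e, he⟩ := U_exh u
      obtain ⟨e', he'⟩ := ih y
      exact ⟨max e e', lm_mem (U_mono (le_max_left _ _) he) (L_mono (le_max_right _ _) _ he')⟩
    · exact ⟨0, Submodule.zero_mem _⟩
    · rintro x y _ _ ⟨e, he⟩ ⟨e', he'⟩
      exact ⟨max e e', Submodule.add_mem _ (L_mono (le_max_left _ _) _ he)
        (L_mono (le_max_right _ _) _ he')⟩
    · rintro c x _ ⟨e, he⟩
      exact ⟨e, Submodule.smul_mem _ _ he⟩

lemma sym_mem {e n : ℕ} {v : Fin n → UnitsQ (RatFunc F)} (hv : ∀ i, v i ∈ U F e) :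
    sym _ n v ∈ L F e n := by
  induction n with
  | zero => trivial
  | succ n ih =>
    rw [sym_succ]
    exact lm_mem (hv 0) (ih fun i => hv i.succ)

lemma L_span (e n : ℕ) : L F e n ≤
    Submodule.span ℚ {x | ∃ v : Fin n → UnitsQ (RatFunc F), (∀ i, v i ∈ U F e) ∧
      x = sym _ n v} := by
  induction n with
  | zero =>
    rintro x -
    have hx : x ∈ (⊤ : Submodule ℚ (MilnorQ (RatFunc F) 0)) := trivial
    rw [← sym_span] at hx
    refine Submodule.span_mono ?_ hx
    rintro _ ⟨v, hv, rfl⟩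
    exact ⟨_, fun i => i.elim0, rfl⟩
  | succ n ih =>
    rw [L, Submodule.map₂_le]
    intro u hu x hx
    refine Submodule.span_induction (p := fun x _ => lm u x ∈ Submodule.span ℚ
      {x | ∃ v : Fin (n + 1) → UnitsQ (RatFunc F), (∀ i, v i ∈ U F e) ∧
        x = sym _ (n + 1) v}) ?_ ?_ ?_ ?_ (ih hx)
    · rintro _ ⟨v, hv, rfl⟩
      refine Submodule.subset_span ⟨Fin.cons u v, ?_, lm_sym _ _⟩
      intro i
      refine Fin.cases hu (fun i => ?_) i
      simpa using hv i
    · rw [map_zero]; exact Submodule.zero_mem _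
    · intro x y _ _ hx hy
      rw [map_add]; exact Submodule.add_mem _ hx hy
    · intro c x _ hx
      rw [map_smul]; exact Submodule.smul_mem _ _ hx

section kill
variable {k : Type u} [Field k] {v : UnitsQ (RatFunc F) →ₗ[ℚ] ℚ}
  {s : UnitsQ (RatFunc F) →ₗ[ℚ] UnitsQ k} (h : TameD v s)

lemma v_kill {e : ℕ} (hv : ∀ p : F[X], p ≠ 0 → p.natDegree ≤ e → v (pm p) = 0)
    {u : UnitsQ (RatFunc F)} (hu : u ∈ U F e) : v u = 0 := by
  have : U F e ≤ LinearMap.ker v := by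
    refine Submodule.span_le.2 ?_
    rintro _ ⟨p, hp, hd, rfl⟩
    exact hv p hp hd
  exact this hu

lemma res_kill {e : ℕ} (hv : ∀ p : F[X], p ≠ 0 → p.natDegree ≤ e → v (pm p) = 0) (n : ℕ) :
    ∀ (u : UnitsQ (RatFunc F)), v u = 0 → ∀ x ∈ L F e n, res h n (lm u x) = 0 := by
  induction n with
  | zero =>
    intro u hu x hx
    rw [res_zero, hu, zero_smul]
  | succ n ih =>
    intro u hu x hx
    rw [res_succ, hu, zero_smul]
    have : L F e (n + 1) ≤ LinearMap.ker (res h n) := by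
      rw [L, Submodule.map₂_le]
      intro w hw y hy
      exact ih w (v_kill hv hw) y hy
    rw [show res h n x = 0 from this hx, map_zero, sub_zero]

lemma res_killL {e : ℕ} (hv : ∀ p : F[X], p ≠ 0 → p.natDegree ≤ e → v (pm p) = 0) (n : ℕ) 
    {x} (hx : x ∈ L F e (n + 1)) : res h n x = 0 := by
  have : L F e (n + 1) ≤ LinearMap.ker (res h n) := by
      rw [L, Submodule.map₂_le]
      intro w hw y hy
      exact res_kill h hv n w (v_kill hv hw) y hy
  exact this hx

lemma res_s0 {u : UnitsQ (RatFunc F)} (hs : s u = 0) (n : ℕ) (x : MilnorQ (RatFunc F) n) :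
    res h n (lm u x) = v u • KM h.st n x := by
  cases n with
  | zero => exact res_zero _ _ _
  | succ n => rw [res_succ, hs, map_zero, LinearMap.zero_apply, sub_zero]

end kill

/-! ### The kernel lemma -/

section kernel
variable {k : Type u} [Field k] [Algebra F k] {θ : k} (hθ : IsIntegral F θ)

lemma aeval_ne_of_lt {g : F[X]} (hg : g ≠ 0) (hd : g.natDegree < (minpoly F θ).natDegree) :
    aeval θ g ≠ 0 := by
  intro h
  have := natDegree_le_natDegree (minpoly.degree_le_of_ne_zero F θ hg h)
  omega

lemma aeval_mbm (g : F[X]) (hθ : IsIntegral F θ) : aeval θ (g %ₘ minpoly F θ) = aeval θ g := by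
  conv_rhs => rw [← modByMonic_add_div g (minpoly F θ)]
  simp

lemma exists_rep (hθ : IsIntegral F θ) (hgen : ∀ z : k, ∃ g : F[X], aeval θ g = z) {e : ℕ}
    (he : (minpoly F θ).natDegree = e + 1) {z : k} (hz : z ≠ 0) :
    ∃ g : F[X], g ≠ 0 ∧ g.natDegree ≤ e ∧ aeval θ g = z := by
  obtain ⟨g, rfl⟩ := hgen z
  refine ⟨g %ₘ minpoly F θ, ?_, ?_, ?_⟩
  · intro h
    apply hz
    rw [← aeval_mbm g hθ, h, map_zero]
  · have := natDegree_modByMonic_lt g (minpoly.monic hθ) (by intro h; rw [h] at he; simp at he)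
    omega
  · exact aeval_mbm _ hθ

/-- the relations -/
def Nr (θ : k) (e : ℕ) : Submodule ℚ (UnitsQ (RatFunc F)) :=
  Submodule.span ℚ {u | ∃ g g' g'' : F[X], g ≠ 0 ∧ g' ≠ 0 ∧ g'' ≠ 0 ∧ g.natDegree ≤ e ∧
    g'.natDegree ≤ e ∧ g''.natDegree ≤ e ∧ aeval θ g = aeval θ g' * aeval θ g'' ∧
    u = pm g - pm g' - pm g''}

lemma rep_unique {e : ℕ} (he : (minpoly F θ).natDegree = e + 1) {g g' : F[X]}
    (h : aeval θ g = aeval θ g') (hg : g.natDegree ≤ e) (hg' : g'.natDegree ≤ e) : g = g' := by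
  by_contra hne
  have h1 := aeval_ne_of_lt (θ := θ) (sub_ne_zero.2 hne) (by
    have := natDegree_sub_le g g'
    rw [he]; omega)
  apply h1
  rw [map_sub, h, sub_self]

lemma ker_le_Nr (hgen : ∀ z : k, ∃ g : F[X], aeval θ g = z) {e : ℕ}
    (he : (minpoly F θ).natDegree = e + 1) {u : UnitsQ (RatFunc F)} (hu : u ∈ U F e)
    (hs : sP hθ u = 0) : u ∈ Nr (F := F) θ e := by
  classical
  choose! r hr0 hrd hr using fun (z : k) (hz : z ≠ 0) => exists_rep hθ hgen he hz
  let φ : UnitsQ k →ₗ[ℚ] (UnitsQ (RatFunc F) ⧸ Nr (F := F) θ e) :=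
    liftQ (fun z => (Nr (F := F) θ e).mkQ (pm (r z))) (by
      intro x y hx hy
      rw [← map_add, ← sub_eq_zero, ← map_sub]
      refine (Submodule.Quotient.mk_eq_zero _).2 (Submodule.subset_span ?_)
      have hxy := mul_ne_zero hx hy
      exact ⟨r (x * y), r x, r y, hr0 _ hxy, hr0 _ hx, hr0 _ hy, hrd _ hxy, hrd _ hx, hrd _ hy,
        by rw [hr _ hxy, hr _ hx, hr _ hy], by abel⟩)
  have key : U F e ≤ LinearMap.ker (φ.comp (sP hθ) - (Nr (F := F) θ e).mkQ) := by
    refine Submodule.span_le.2 ?_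
    rintro _ ⟨p, hp, hd, rfl⟩
    have hp' := aeval_ne_of_lt (θ := θ) hp (by omega)
    have : r (aeval θ p) = p := rep_unique he (hr _ hp') (hrd _ hp') hd
    simp only [SetLike.mem_coe, LinearMap.mem_ker, LinearMap.sub_apply, LinearMap.comp_apply,
      sP_unit hθ hp', φ, liftQ_mkQ _ _ hp', this, sub_self]
  have h1 := key hu
  simp only [LinearMap.mem_ker, LinearMap.sub_apply, LinearMap.comp_apply, hs, map_zero,
    zero_sub, neg_eq_zero] at h1
  exact (Submodule.Quotient.mk_eq_zero _).1 h1

lemma ker_mem (hgen : ∀ z : k, ∃ g : F[X], aeval θ g = z) {e : ℕ}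
    (he : (minpoly F θ).natDegree = e + 1) {u : UnitsQ (RatFunc F)} (hu : u ∈ U F e)
    (hs : sP hθ u = 0) {n : ℕ} {x : MilnorQ (RatFunc F) n} (hx : x ∈ L F e n) :
    lm (pm (minpoly F θ)) (lm u x) ∈ L F e (n + 2) := by
  have hπ0 := minpoly.ne_zero hθ
  have key : Nr (F := F) θ e ≤ (L F e (n + 2)).comap
      ((lm (pm (minpoly F θ))).comp (lm.flip x)) := by
    refine Submodule.span_le.2 ?_
    rintro _ ⟨g, g', g'', hg, hg', hg'', hd, hd', hd'', hgg, rfl⟩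
    simp only [SetLike.mem_coe, Submodule.mem_comap, LinearMap.comp_apply, LinearMap.flip_apply]
    have hdvd : minpoly F θ ∣ g' * g'' - g := minpoly.dvd F θ (by simp [hgg])
    obtain ⟨f, hf⟩ := hdvd
    by_cases hf0 : f = 0
    · have : g = g' * g'' := by rw [hf0, mul_zero] at hf; exact (sub_eq_zero.1 hf).symm
      rw [this, pm_mul hg' hg'']
      have : pm g' + pm g'' - pm g' - pm g'' = 0 := by abel
      rw [this]
      simp
    · have hfd : f.natDegree ≤ e := by
        have h1 : (minpoly F θ * f).natDegree = e + 1 + f.natDegree := by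
          rw [natDegree_mul hπ0 hf0, he]
        have h2 := natDegree_sub_le (g' * g'') g
        rw [hf, h1, natDegree_mul hg' hg''] at h2
        rcases le_max_iff.1 h2 with h2 | h2 <;> omega
      have hgg0 := mul_ne_zero hg' hg''
      have hst := lm_steinberg (F := RatFunc F)
        (a := algebraMap F[X] (RatFunc F) (minpoly F θ * f) / algebraMap F[X] (RatFunc F) (g' * g''))
        (b := algebraMap F[X] (RatFunc F) g / algebraMap F[X] (RatFunc F) (g' * g''))
        (div_ne_zero (aM_ne (mul_ne_zero hπ0 hf0)) (aM_ne hgg0))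
        (div_ne_zero (aM_ne hg) (aM_ne hgg0)) (by
          rw [← add_div, ← map_add, ← hf, sub_add_cancel, div_self (aM_ne hgg0)]) x
      rw [mkQ_div (aM_ne (mul_ne_zero hπ0 hf0)) (aM_ne hgg0), mkQ_div (aM_ne hg) (aM_ne hgg0)]
        at hst
      change lm (pm (minpoly F θ * f) - pm (g' * g'')) (lm (pm g - pm (g' * g'')) x) = 0 at hst
      rw [pm_mul hπ0 hf0, pm_mul hg' hg'', ← sub_sub (pm g), add_sub_assoc, map_add,
        LinearMap.add_apply] at hst
      rw [eq_neg_of_add_eq_zero_left hst]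
      apply Submodule.neg_mem
      have m1 := pm_mem hg hd
      have m2 := pm_mem hg' hd'
      have m3 := pm_mem hg'' hd''
      have m4 := pm_mem hf0 hfd
      exact lm_mem (Submodule.sub_mem _ m4 (Submodule.add_mem _ m2 m3))
        (lm_mem (Submodule.sub_mem _ (Submodule.sub_mem _ m1 m2) m3) hx)
  exact key (ker_le_Nr hθ hgen he hu hs)

lemma exists_sec (hgen : ∀ z : k, ∃ g : F[X], aeval θ g = z) {e : ℕ}
    (he : (minpoly F θ).natDegree = e + 1) : ∃ τ : UnitsQ k →ₗ[ℚ] UnitsQ (RatFunc F),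
      (∀ z, τ z ∈ U F e) ∧ ∀ z, sP hθ (τ z) = z := by
  have hsurj : LinearMap.range ((sP hθ).comp (U F e).subtype) = ⊤ := by
    rw [eq_top_iff, ← span_mkQ, Submodule.span_le]
    rintro _ ⟨z, hz, rfl⟩
    obtain ⟨g, hg, hd, rfl⟩ := exists_rep hθ hgen he hz
    exact ⟨⟨pm g, pm_mem hg hd⟩, sP_unit hθ hz⟩
  obtain ⟨τ, hτ⟩ := LinearMap.exists_rightInverse_of_surjective _ hsurj
  exact ⟨(U F e).subtype.comp τ, fun z => (τ z).2, fun z => LinearMap.congr_fun hτ z⟩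

lemma exists_lift (hgen : ∀ z : k, ∃ g : F[X], aeval θ g = z) {e : ℕ}
    (he : (minpoly F θ).natDegree = e + 1) (n : ℕ) (y : MilnorQ k n) :
    ∃ z ∈ L F e n, KM (tP hθ).st n z = y := by
  obtain ⟨τ, h1, h2⟩ := exists_sec hθ hgen he
  have : (⊤ : Submodule ℚ (MilnorQ k n)) ≤ (L F e n).map (KM (tP hθ).st n) := by
    rw [← sym_span, Submodule.span_le]
    rintro _ ⟨v, hv, rfl⟩
    refine ⟨_, sym_mem (fun i => h1 (mkQ (v i))), ?_⟩
    rw [KM_sym]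
    simp only [h2]
  exact this trivial

lemma sym_diff (hgen : ∀ z : k, ∃ g : F[X], aeval θ g = z) {e : ℕ}
    (he : (minpoly F θ).natDegree = e + 1) {n : ℕ} (v v' : Fin n → UnitsQ (RatFunc F))
    (hv : ∀ i, v i ∈ U F e) (hv' : ∀ i, v' i ∈ U F e) (hs : ∀ i, sP hθ (v i) = sP hθ (v' i)) :
    lm (pm (minpoly F θ)) (sym _ n v - sym _ n v') ∈ L F e (n + 1) := by
  induction n with
  | zero =>
    rw [Subsingleton.elim v v', sub_self, map_zero]
    exact Submodule.zero_mem _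
  | succ n ih =>
    have h1 : sym _ (n + 1) v - sym _ (n + 1) v' = lm (v 0 - v' 0) (sym _ n (Fin.tail v)) +
        lm (v' 0) (sym _ n (Fin.tail v) - sym _ n (Fin.tail v')) := by
      rw [sym_succ, sym_succ v', map_sub, map_sub, LinearMap.sub_apply]
      abel
    rw [h1, map_add]
    apply Submodule.add_mem
    · apply ker_mem hθ hgen he (Submodule.sub_mem _ (hv 0) (hv' 0))
      · rw [map_sub, hs, sub_self]
      · exact sym_mem (fun i => hv i.succ)
    · rw [lm_swap]
      apply Submodule.neg_mem
      exact lm_mem (hv' 0) (ih _ _ (fun i => hv i.succ) (fun i => hv' i.succ)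
        (fun i => hs i.succ))

lemma kernel_lemma (hgen : ∀ z : k, ∃ g : F[X], aeval θ g = z) {e : ℕ}
    (he : (minpoly F θ).natDegree = e + 1) {n : ℕ} {z : MilnorQ (RatFunc F) n}
    (hz : z ∈ L F e n) (hz0 : KM (tP hθ).st n z = 0) :
    lm (pm (minpoly F θ)) z ∈ L F e (n + 1) := by
  obtain ⟨τ, h1, h2⟩ := exists_sec hθ hgen he
  let φ : (UnitsQ k) [⋀^Fin n]→ₗ[ℚ] (MilnorQ (RatFunc F) (n + 1) ⧸ L F e (n + 1)) :=
    ((L F e (n + 1)).mkQ.comp (lm (pm (minpoly F θ)))).compAlternatingMap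
      ((sym _ n).compLinearMap τ)
  have φ_apply : ∀ v, φ v = (L F e (n + 1)).mkQ (lm (pm (minpoly F θ))
    (sym _ n (fun i => τ (v i)))) := fun v => rfl
  have hφ : StAlt n φ := by
    match n, φ, φ_apply with
    | 0, _, _ => trivial
    | 1, _, _ => trivial
    | (m + 2), φ, φ_apply =>
      intro a v ha ha1 hv
      rw [φ_apply]
      refine (Submodule.Quotient.mk_eq_zero _).2 ?_
      obtain ⟨g, hg, hd, rfl⟩ := exists_rep hθ hgen he ha
      have hb : 1 - aeval θ g ≠ 0 := sub_ne_zero.2 ha1.symm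
      have hg1 : 1 - g ≠ 0 := by
        intro h
        apply hb
        simpa using congrArg (aeval θ) h
      have hd1 : (1 - g).natDegree ≤ e := by
        refine (natDegree_sub_le _ _).trans ?_
        simp [hd]
      have hag1 : aeval θ (1 - g) = 1 - aeval θ g := by simp
      set w : Fin (m + 2) → UnitsQ (RatFunc F) :=
        Fin.cons (pm g) (Fin.cons (pm (1 - g)) (fun i => τ (v i))) with hw
      set w' : Fin (m + 2) → UnitsQ (RatFunc F) := (fun i => τ ((Fin.cons (mkQ (aeval θ g)) 
        (Fin.cons (mkQ (1 - aeval θ g)) v) : Fin (m + 2) → UnitsQ k) i)) with hw'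
      have h0 : sym _ (m + 2) w = 0 := by
        rw [sym_succ, sym_succ]
        apply lm_steinberg (aM_ne hg) (aM_ne hg1)
        rw [← map_add]
        simp
      have hdiff := sym_diff hθ hgen he w' w (fun i => h1 _) (by
          intro i
          refine Fin.cases ?_ (fun i => Fin.cases ?_ (fun i => ?_) i) i
          · exact pm_mem hg hd
          · exact pm_mem hg1 hd1
          · exact h1 _) (by
          intro i
          refine Fin.cases ?_ (fun i => Fin.cases ?_ (fun i => ?_) i) i
          · simp only [hw, hw', h2, Fin.cons_zero]
            rw [sP_unit hθ ha]
          · simp only [hw, hw', h2, Fin.cons_zero, Fin.cons_succ]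
            rw [sP_unit hθ (by rwa [hag1]), hag1]
          · simp only [hw, hw', h2, Fin.cons_succ])
      rw [h0, sub_zero] at hdiff
      exact hdiff
  have key : L F e n ≤ LinearMap.ker ((Klift φ hφ).comp (KM (tP hθ).st n) -
      (L F e (n + 1)).mkQ.comp (lm (pm (minpoly F θ)))) := by
    refine (L_span e n).trans (Submodule.span_le.2 ?_)
    rintro _ ⟨v, hv, rfl⟩
    simp only [SetLike.mem_coe, LinearMap.mem_ker, LinearMap.sub_apply, LinearMap.comp_apply,
      KM_sym, Klift_sym, φ_apply]
    rw [← map_sub, ← map_sub]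
    refine (Submodule.Quotient.mk_eq_zero _).2 ?_
    exact sym_diff hθ hgen he _ v (fun i => h1 _) hv (fun i => h2 _)
  have h3 := key hz
  simp only [LinearMap.mem_ker, LinearMap.sub_apply, LinearMap.comp_apply, hz0, map_zero,
    zero_sub, neg_eq_zero] at h3
  exact (Submodule.Quotient.mk_eq_zero _).1 h3

end kernel

end filt

end MK

end MKpart3

noncomputable section MKpart4

namespace MK

open Polynomial

section places
variable {F : Type u} [Field F]

/-- monic irreducible -/
def MI (π : F[X]) : Prop := π.Monic ∧ Irreducible π

lemma exists_place {π : F[X]} (hπ : MI π) : ∃ (k : Type u) (_ : Field k) (_ : Algebra F k) (θ : k)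
    (_ : IsIntegral F θ), minpoly F θ = π ∧ (∀ z : k, ∃ g : F[X], aeval θ g = z) ∧
    ∀ (k' : Type u) [Field k'] [Algebra F k'] (θ' : k'), minpoly F θ' = π →
      ∃ f : k →ₐ[F] k', f θ = θ' := by
  have : Fact (Irreducible π) := ⟨hπ.2⟩
  refine ⟨AdjoinRoot π, inferInstance, inferInstance, AdjoinRoot.root π,
    AdjoinRoot.isIntegral_root hπ.1.ne_zero, ?_, ?_, ?_⟩
  · rw [AdjoinRoot.minpoly_root hπ.1.ne_zero, hπ.1.leadingCoeff, inv_one, C.map_one, mul_one]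
  · intro z
    obtain ⟨g, rfl⟩ := AdjoinRoot.mk_surjective z
    exact ⟨g, AdjoinRoot.aeval_eq g⟩
  · intro k' _ _ θ' h
    refine ⟨AdjoinRoot.liftAlgHom π (Algebra.ofId F k') θ' ?_, AdjoinRoot.liftAlgHom_root _ _ _ _⟩
    have := minpoly.aeval F θ'
    rw [h] at this
    exact this

lemma res_transfer {k k' : Type u} [Field k] [Algebra F k] [Field k'] [Algebra F k'] {θ : k}
    {θ' : k'} (hθ : IsIntegral F θ) (hθ' : IsIntegral F θ') (f : k →ₐ[F] k') (hf : f θ = θ')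
    (n : ℕ) (x : MilnorQ (RatFunc F) (n + 1)) :
    KM (StC_map f.toRingHom) n (res (tP hθ) n x) = res (tP hθ') n x := by
  have hmin : minpoly F θ' = minpoly F θ := by
    rw [← hf]; exact minpoly.algHom_eq f f.injective θ
  have hae : ∀ g : F[X], aeval θ' g = f (aeval θ g) := by
    intro g; rw [← hf, aeval_algHom_apply]
  apply KM_res
  · intro u
    refine LinearMap.congr_fun (lin_pm_ext ?_) u
    intro p hp
    obtain ⟨m, g, rfl, hg⟩ := exists_fac hθ hp
    rw [vP_fac hθ hg, ← hmin, vP_fac hθ' (by rw [hae]; simpa using hg)]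
  · intro u
    refine LinearMap.congr_fun (f := (unitsQMap f.toRingHom).comp (sP hθ)) (lin_pm_ext ?_) u
    intro p hp
    obtain ⟨m, g, rfl, hg⟩ := exists_fac hθ hp
    rw [LinearMap.comp_apply, sP_fac hθ hg, ← hmin, sP_fac hθ' (by rw [hae]; simpa using hg),
      unitsQMap_mkQ, hae]
    rfl

/-- vanishing of the residue -/
def RZ (π : F[X]) {n : ℕ} (x : MilnorQ (RatFunc F) (n + 1)) : Prop :=
  ∀ (k : Type u) [Field k] [Algebra F k] (θ : k) (hθ : IsIntegral F θ), minpoly F θ = π →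
    res (tP hθ) n x = 0

lemma RZ_sub {π : F[X]} {n : ℕ} {x y : MilnorQ (RatFunc F) (n + 1)} (hx : RZ π x) (hy : RZ π y) :
    RZ π (x - y) := by
  intro k _ _ θ hθ h
  rw [map_sub, hx k θ hθ h, hy k θ hθ h, sub_zero]

lemma RZ_add {π : F[X]} {n : ℕ} {x y : MilnorQ (RatFunc F) (n + 1)} (hx : RZ π x) (hy : RZ π y) :
    RZ π (x + y) := by
  intro k _ _ θ hθ h
  rw [map_add, hx k θ hθ h, hy k θ hθ h, add_zero]

lemma vP_low {k : Type u} [Field k] [Algebra F k] {θ : k} (hθ : IsIntegral F θ) {e : ℕ}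
    (he : e < (minpoly F θ).natDegree) (p : F[X]) (hp : p ≠ 0) (hd : p.natDegree ≤ e) :
    vP hθ (pm p) = 0 :=
  vP_unit hθ (aeval_ne_of_lt hp (by omega))

lemma vP_other {k : Type u} [Field k] [Algebra F k] {θ : k} (hθ : IsIntegral F θ) {π : F[X]}
    (hπ : MI π) (hne : minpoly F θ ≠ π) : vP hθ (pm π) = 0 := by
  apply vP_unit hθ
  intro h
  have h1 := minpoly.dvd F θ h
  have h2 : Associated (minpoly F θ) π :=
    (minpoly.irreducible hθ).associated_of_dvd hπ.2 h1
  exact hne (eq_of_monic_of_associated (minpoly.monic hθ) hπ.1 h2)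

lemma RZ_L {π : F[X]} {e n : ℕ} (he : e < π.natDegree) {x : MilnorQ (RatFunc F) (n + 1)}
    (hx : x ∈ L F e (n + 1)) : RZ π x := by
  intro k _ _ θ hθ h
  subst h
  exact res_killL _ (vP_low hθ he) n hx

lemma RZ_other {π π' : F[X]} (hπ' : MI π') (hne : π ≠ π') {e n : ℕ} (he : e < π.natDegree)
    {x : MilnorQ (RatFunc F) n} (hx : x ∈ L F e n) : RZ π (lm (pm π') x) := by
  intro k _ _ θ hθ h
  subst h
  exact res_kill _ (vP_low hθ he) n _ (vP_other hθ hπ' hne) x hx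

lemma RZ_finite (n : ℕ) : ∀ (x : MilnorQ (RatFunc F) (n + 1)), ∃ S : Finset F[X], ∀ π ∉ S,
    RZ π x := by
  classical
  have step : ∀ p : F[X], p ≠ 0 → ∃ S : Finset F[X], ∀ π ∉ S, ∀ (k : Type u) [Field k]
      [Algebra F k] (θ : k) (hθ : IsIntegral F θ), minpoly F θ = π → vP hθ (pm p) = 0 := by
    intro p hp
    refine ⟨(UniqueFactorizationMonoid.normalizedFactors p).toFinset, ?_⟩
    intro π hπ k _ _ θ hθ h
    apply vP_unit hθ
    intro h0
    apply hπ
    rw [Multiset.mem_toFinset, UniqueFactorizationMonoid.mem_normalizedFactors_iff' hp, ← h]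
    exact ⟨minpoly.irreducible hθ, (minpoly.monic hθ).normalize_eq_self, minpoly.dvd F θ h0⟩
  have gen : ∀ (n : ℕ) (P : MilnorQ (RatFunc F) (n + 1) → Prop), (∀ p : F[X], p ≠ 0 → ∀ x, P (lm (pm p) x)) → P 0 →
      (∀ x y, P x → P y → P (x + y)) → (∀ (c : ℚ) x, P x → P (c • x)) → ∀ x, P x := by
    intro n P h1 h2 h3 h4 x
    have hx : x ∈ Submodule.span ℚ {y : MilnorQ (RatFunc F) (n + 1) | ∃ u ∈
        {u : UnitsQ (RatFunc F) | ∃ p : F[X], p ≠ 0 ∧ u = pm p},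
        ∃ x : MilnorQ (RatFunc F) n, y = lm u x} := by
      rw [lm_span n _ span_pm]; trivial
    refine Submodule.span_induction (p := fun x _ => P x) ?_ h2 (fun x y _ _ => h3 x y)
      (fun c x _ => h4 c x) hx
    rintro _ ⟨_, ⟨p, hp, rfl⟩, y, rfl⟩
    exact h1 p hp y
  have hadd : ∀ (n : ℕ) (x y : MilnorQ (RatFunc F) (n + 1)), (∃ S : Finset F[X], ∀ π ∉ S, RZ π x) →
      (∃ S : Finset F[X], ∀ π ∉ S, RZ π y) → (∃ S : Finset F[X], ∀ π ∉ S, RZ π (x + y)) := by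
    rintro n x y ⟨S, hS⟩ ⟨T, hT⟩
    refine ⟨S ∪ T, fun π hπ => ?_⟩
    rw [Finset.mem_union, not_or] at hπ
    exact RZ_add (hS π hπ.1) (hT π hπ.2)
  have smul : ∀ (n : ℕ) (c : ℚ) (x : MilnorQ (RatFunc F) (n + 1)),
      (∃ S : Finset F[X], ∀ π ∉ S, RZ π x) → (∃ S : Finset F[X], ∀ π ∉ S, RZ π (c • x)) := by
    rintro n c x ⟨S, hS⟩
    refine ⟨S, fun π hπ k _ _ θ hθ h => ?_⟩
    rw [map_smul, hS π hπ k θ hθ h, smul_zero]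
  have zero : ∀ (n : ℕ), (∃ S : Finset F[X], ∀ π ∉ S, RZ π (0 : MilnorQ (RatFunc F) (n + 1))) := by
    intro n
    exact ⟨∅, fun π hπ k _ _ θ hθ h => map_zero _⟩
  induction n with
  | zero =>
    refine gen 0 _ ?_ (zero 0) (hadd 0) (smul 0)
    intro p hp x
    obtain ⟨S, hS⟩ := step p hp
    refine ⟨S, fun π hπ k _ _ θ hθ h => ?_⟩
    rw [res_zero, hS π hπ k θ hθ h, zero_smul]
  | succ n ih =>
    refine gen (n + 1) _ ?_ (zero _) (hadd _) (smul _)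
    intro p hp x
    obtain ⟨S, hS⟩ := step p hp
    obtain ⟨T, hT⟩ := ih x
    refine ⟨S ∪ T, fun π hπ k _ _ θ hθ h => ?_⟩
    rw [Finset.mem_union, not_or] at hπ
    rw [res_succ, hS π hπ.1 k θ hθ h, zero_smul, hT π hπ.2 k θ hθ h, map_zero, sub_zero]

/-! ### Generation -/

lemma U_dec (e : ℕ) : U F (e + 1) ≤ U F e ⊔ Submodule.span ℚ
    {u | ∃ π : F[X], MI π ∧ π.natDegree = e + 1 ∧ u = pm π} := by
  refine Submodule.span_le.2 ?_
  rintro _ ⟨p, hp, hd, rfl⟩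
  by_cases hle : p.natDegree ≤ e
  · exact Submodule.mem_sup_left (pm_mem hp hle)
  have hd' : p.natDegree = e + 1 := by omega
  by_cases hirr : Irreducible p
  · have hl := leadingCoeff_ne_zero.2 hp
    have hm := monic_mul_leadingCoeff_inv hp
    have hc : C p.leadingCoeff⁻¹ ≠ 0 := by simpa using hp
    have h1 := pm_mul hp hc
    have h2 : pm p = pm (p * C p.leadingCoeff⁻¹) - pm (C p.leadingCoeff⁻¹) := by rw [h1]; abel
    rw [h2]
    apply Submodule.sub_mem
    · refine Submodule.mem_sup_right (Submodule.subset_span ⟨_, ⟨hm, ?_⟩, ?_, rfl⟩)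
      · rwa [irreducible_mul_leadingCoeff_inv]
      · rw [natDegree_mul hp hc, natDegree_C, hd', add_zero]
    · exact Submodule.mem_sup_left (pm_mem hc (by simp))
  · have hnu : ¬ IsUnit p := by
      intro h
      have := natDegree_eq_zero_of_isUnit h
      omega
    rw [irreducible_iff] at hirr
    push Not at hirr
    obtain ⟨a, b, hab, ha, hb⟩ := hirr hnu
    have ha0 : a ≠ 0 := by rintro rfl; simp at hab; exact hp hab
    have hb0 : b ≠ 0 := by rintro rfl; simp at hab; exact hp hab
    have ha1 : a.natDegree ≠ 0 := by
      intro h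
      exact ha (isUnit_iff_degree_eq_zero.2 (by rw [degree_eq_natDegree ha0, h]; rfl))
    have hb1 : b.natDegree ≠ 0 := by
      intro h
      exact hb (isUnit_iff_degree_eq_zero.2 (by rw [degree_eq_natDegree hb0, h]; rfl))
    have hdeg := natDegree_mul ha0 hb0
    rw [← hab] at hdeg
    rw [hab, pm_mul ha0 hb0]
    exact Submodule.mem_sup_left (Submodule.add_mem _ (pm_mem ha0 (by omega))
      (pm_mem hb0 (by omega)))

/-- the decomposition target -/
def Dc (F : Type u) [Field F] (e m : ℕ) : Submodule ℚ (MilnorQ (RatFunc F) (m + 1)) :=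
  L F e (m + 1) ⊔ ⨆ π : {π : F[X] // MI π ∧ π.natDegree = e + 1}, (L F e m).map (lm (pm π.1))

lemma mem_Dc {e m : ℕ} {π : F[X]} (h : MI π) (hd : π.natDegree = e + 1)
    {x : MilnorQ (RatFunc F) m} (hx : x ∈ L F e m) : lm (pm π) x ∈ Dc F e m :=
  Submodule.mem_sup_right (Submodule.mem_iSup_of_mem
    (p := fun π : {π : F[X] // MI π ∧ π.natDegree = e + 1} => (L F e m).map (lm (pm π.1)))
    ⟨π, h, hd⟩ ⟨x, hx, rfl⟩)

lemma lmDc_U {e m : ℕ} {u : UnitsQ (RatFunc F)} (hu : u ∈ U F e) :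
    Dc F e m ≤ (Dc F e (m + 1)).comap (lm u) := by
  refine sup_le ?_ (iSup_le ?_)
  · intro x hx
    exact Submodule.mem_sup_left (lm_mem hu hx)
  · rintro ⟨π, hπ, hd⟩ _ ⟨x, hx, rfl⟩
    rw [Submodule.mem_comap, lm_swap]
    exact Submodule.neg_mem _ (mem_Dc hπ hd (lm_mem hu hx))

lemma lmDc_pi {e m : ℕ} {π : F[X]} (h : MI π) (hd : π.natDegree = e + 1) :
    Dc F e m ≤ (Dc F e (m + 1)).comap (lm (pm π)) := by
  refine sup_le ?_ (iSup_le ?_)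
  · intro x hx
    exact mem_Dc h hd hx
  · rintro ⟨π', hπ', hd'⟩ _ ⟨x, hx, rfl⟩
    simp only [Submodule.mem_comap]
    by_cases hne : π' = π
    · rw [hne, lm_self]; exact Submodule.zero_mem _
    have hf : π' - π ≠ 0 := sub_ne_zero.2 hne
    have hfd : (π' - π).natDegree ≤ e := by
      have : (π' - π).degree < π'.degree := by
        apply degree_sub_lt_left _ hπ'.1.ne_zero
        · rw [hπ'.1.leadingCoeff, h.1.leadingCoeff]
        · rw [degree_eq_natDegree hπ'.1.ne_zero, degree_eq_natDegree h.1.ne_zero, hd, hd']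
      have := natDegree_lt_natDegree hf this
      omega
    have h1 := aM_ne hπ'.1.ne_zero
    have h2 := aM_ne h.1.ne_zero
    have h3 := aM_ne hf
    have hst := lm_steinberg (div_ne_zero h2 h1) (div_ne_zero h3 h1)
      (by rw [← add_div, ← map_add, add_sub_cancel, div_self h1]) x
    rw [mkQ_div h2 h1, mkQ_div h3 h1] at hst
    change lm (pm π - pm π') (lm (pm (π' - π) - pm π') x) = 0 at hst
    simp only [map_sub, LinearMap.sub_apply, lm_self, sub_zero] at hst
    have h4 : lm (pm π) (lm (pm π') x) = lm (pm π) (lm (pm (π' - π)) x) -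
        lm (pm π') (lm (pm (π' - π)) x) := by
      rw [← sub_eq_zero, ← neg_eq_zero, ← hst]
      abel
    rw [h4]
    have h5 := pm_mem hf hfd
    exact Submodule.sub_mem _ (mem_Dc h hd (lm_mem h5 hx)) (mem_Dc hπ' hd' (lm_mem h5 hx))

lemma L_dec (e m : ℕ) : L F (e + 1) (m + 1) ≤ Dc F e m := by
  have key : ∀ (m : ℕ) (N : Submodule ℚ (MilnorQ (RatFunc F) (m + 1))) (x : MilnorQ (RatFunc F) m),
      (∀ u ∈ U F e, lm u x ∈ N) → (∀ π : F[X], MI π → π.natDegree = e + 1 → lm (pm π) x ∈ N) →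
      ∀ u ∈ U F (e + 1), lm u x ∈ N := by
    intro m N x h1 h2 u hu
    have : U F (e + 1) ≤ N.comap (lm.flip x) := by
      refine (U_dec e).trans (sup_le h1 (Submodule.span_le.2 ?_))
      rintro _ ⟨π, hπ, hd, rfl⟩
      exact h2 π hπ hd
    exact this hu
  induction m with
  | zero =>
    rw [L, Submodule.map₂_le]
    intro u hu x _
    refine key _ _ x ?_ ?_ u hu
    · intro u hu
      exact Submodule.mem_sup_left (lm_mem hu trivial)
    · intro π hπ hd
      exact mem_Dc hπ hd trivial
  | succ m ih =>
    rw [L, Submodule.map₂_le]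
    intro u hu x hx
    refine key _ _ x ?_ ?_ u hu
    · intro u hu
      exact lmDc_U hu (ih hx)
    · intro π hπ hd
      exact lmDc_pi hπ hd (ih hx)

/-! ### Exactness -/

lemma exact_step {e m : ℕ} {x : MilnorQ (RatFunc F) (m + 1)} (hx : x ∈ L F (e + 1) (m + 1))
    (h : ∀ π : F[X], MI π → π.natDegree = e + 1 → RZ π x) : x ∈ L F e (m + 1) := by
  classical
  obtain ⟨l, hl, y, hy, rfl⟩ := Submodule.mem_sup.1 (L_dec e m hx)
  rw [Submodule.mem_iSup_iff_exists_finsupp] at hy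
  obtain ⟨f, hf, rfl⟩ := hy
  refine Submodule.add_mem _ hl (Submodule.sum_mem _ ?_)
  intro π₀ hπ₀
  choose z hz hz' using hf
  obtain ⟨k, _, _, θ, hθ, hmin, hgen, -⟩ := exists_place π₀.2.1
  have h1 := h π₀.1 π₀.2.1 π₀.2.2 k θ hθ hmin
  have hdeg : e < (minpoly F θ).natDegree := by rw [hmin, π₀.2.2]; omega
  rw [map_add, res_killL _ (vP_low hθ hdeg) m hl, zero_add, Finsupp.sum, map_sum,
    Finset.sum_eq_single π₀] at h1
  · rw [← hz', ← hmin]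
    apply kernel_lemma hθ hgen (by rw [hmin, π₀.2.2]) (hz π₀)
    rw [← hz', ← hmin, res_s0 _ (sP_self hθ), vP_self, one_smul] at h1
    exact h1
  · intro π hπ hne
    rw [← hz']
    refine RZ_other (π := π₀.1) π.2.1 ?_ ?_ (hz π) k θ hθ hmin
    · exact fun h => hne (Subtype.ext h.symm)
    · rw [← hmin]; exact hdeg
  · intro h; exact absurd hπ₀ h

theorem exactness {m : ℕ} {x : MilnorQ (RatFunc F) (m + 1)} (h : ∀ π : F[X], MI π → RZ π x) :
    x ∈ L F 0 (m + 1) := by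
  obtain ⟨e, he⟩ := L_exh _ x
  induction e with
  | zero => exact he
  | succ e ih => exact ih (exact_step he (fun π hπ _ => h π hπ))

theorem reciprocity {m : ℕ} {x : MilnorQ (RatFunc F) (m + 1)} (h : ∀ π : F[X], MI π → RZ π x) :
    res (tInf F) m x = 0 := by
  apply res_killL _ _ m (exactness h)
  intro p hp hd
  rw [vInf_pm hp]
  simp [Nat.le_zero.1 hd]

/-! ### Correction -/

lemma exists_z {π : F[X]} (hπ : MI π) {e n : ℕ} (hd : π.natDegree = e + 1)
    (x : MilnorQ (RatFunc F) (n + 1)) : ∃ z ∈ L F (e + 1) (n + 1), RZ π (x - z) ∧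
      ∀ π' : F[X], e < π'.natDegree → π' ≠ π → RZ π' z := by
  obtain ⟨k, _, _, θ, hθ, hmin, hgen, huniv⟩ := exists_place hπ
  obtain ⟨ζ, hζ, hζ'⟩ := exists_lift hθ hgen (hmin ▸ hd) n (res (tP hθ) n x)
  refine ⟨lm (pm π) ζ, lm_mem (pm_mem hπ.1.ne_zero hd.le) (L_mono (Nat.le_succ e) _ hζ), ?_, ?_⟩
  · intro k' _ _ θ' hθ' h'
    obtain ⟨f, hf⟩ := huniv k' θ' h'
    rw [← res_transfer hθ hθ' f hf, map_sub]
    have : res (tP hθ) n (lm (pm π) ζ) = res (tP hθ) n x := by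
      rw [← hmin, res_s0 _ (sP_self hθ), vP_self, one_smul, hζ']
    rw [this, sub_self, map_zero]
  · intro π' he hne
    exact RZ_other hπ hne he hζ

lemma corr_deg (e n : ℕ) (S : Finset F[X]) : ∀ (x : MilnorQ (RatFunc F) (n + 1)),
    (∀ π : F[X], MI π → π.natDegree = e + 1 → π ∉ S → RZ π x) →
    ∃ z ∈ L F (e + 1) (n + 1), ∀ π : F[X], MI π → π.natDegree = e + 1 → RZ π (x - z) := by
  classical
  induction S using Finset.induction_on with
  | empty =>
    intro x hx
    refine ⟨0, Submodule.zero_mem _, fun π h1 h2 => ?_⟩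
    rw [sub_zero]
    exact hx π h1 h2 (by simp)
  | insert π₀ S hπ₀ ih =>
    intro x hx
    by_cases h0 : MI π₀ ∧ π₀.natDegree = e + 1
    · obtain ⟨z, hz, h1, h2⟩ := exists_z h0.1 h0.2 x
      obtain ⟨z', hz', h3⟩ := ih (x - z) (by
        intro π a b c
        by_cases h : π = π₀
        · rw [h]; exact h1
        · exact RZ_sub (hx π a b (by simp [h, c])) (h2 π (by omega) h))
      refine ⟨z + z', Submodule.add_mem _ hz hz', fun π a b => ?_⟩
      rw [← sub_sub]
      exact h3 π a b
    · refine ih x (fun π a b c => hx π a b ?_)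
      rw [Finset.mem_insert, not_or]
      refine ⟨?_, c⟩
      rintro rfl
      exact h0 ⟨a, b⟩

theorem correction (n d : ℕ) : ∀ (x : MilnorQ (RatFunc F) (n + 1)), ∃ x', x' - x ∈ L F d (n + 1) ∧
    ∀ π : F[X], MI π → π.natDegree ≤ d → RZ π x' := by
  induction d with
  | zero =>
    intro x
    refine ⟨x, by simp, fun π h1 h2 => ?_⟩
    have := h1.2.natDegree_pos
    omega
  | succ d ih =>
    intro x
    obtain ⟨S, hS⟩ := RZ_finite n x
    obtain ⟨z, hz, h1⟩ := corr_deg d n S x (fun π _ _ h => hS π h)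
    obtain ⟨x', h2, h3⟩ := ih (x - z)
    refine ⟨x', ?_, fun π a b => ?_⟩
    · have : x' - x = (x' - (x - z)) - z := by abel
      rw [this]
      exact Submodule.sub_mem _ (L_mono (Nat.le_succ d) _ h2) hz
    · rcases Nat.lt_or_ge d π.natDegree with h | h
      · have : x' = (x' - (x - z)) + (x - z) := by abel
        rw [this]
        exact RZ_add (RZ_L h h2) (h1 π a (by omega))
      · exact h3 π a h

end places

end MK

end MKpart4

noncomputable section MKpart5

namespace MK

open Polynomial

section const
variable {F : Type u} [Field F]

/-- constants -/
def cst (F : Type u) [Field F] : F →+* RatFunc F := (algebraMap F[X] (RatFunc F)).comp C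

lemma cst_mkQ (a : F) : unitsQMap (cst F) (mkQ a) = pm (C a) := unitsQMap_mkQ _ _

/-- constants in Milnor K-theory -/
def cK (n : ℕ) : MilnorQ F n →ₗ[ℚ] MilnorQ (RatFunc F) n := KM (StC_map (cst F)) n

lemma res_vanish {E E' k : Type u} [Field E] [Field E'] [Field k] {v : UnitsQ E →ₗ[ℚ] ℚ}
    {s : UnitsQ E →ₗ[ℚ] UnitsQ k} (h : TameD v s) {t : UnitsQ E' →ₗ[ℚ] UnitsQ E} (ht : StC t)
    (hv : ∀ u, v (t u) = 0) (n : ℕ) : ∀ y : MilnorQ E' (n + 1), res h n (KM ht (n + 1) y) = 0 := by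
  induction n with
  | zero =>
    intro y
    have : (res h 0).comp (KM ht 1) = 0 := by
      apply lm_ext
      intro u x
      rw [LinearMap.comp_apply, KM_lm, res_zero, hv, zero_smul, LinearMap.zero_apply]
    exact LinearMap.congr_fun this y
  | succ n ih =>
    intro y
    have : (res h (n + 1)).comp (KM ht (n + 2)) = 0 := by
      apply lm_ext
      intro u x
      rw [LinearMap.comp_apply, KM_lm, res_succ, hv, zero_smul, ih, map_zero, sub_zero,
        LinearMap.zero_apply]
    exact LinearMap.congr_fun this y

lemma res_cst {E E' k : Type u} [Field E] [Field E'] [Field k] {v : UnitsQ E →ₗ[ℚ] ℚ}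
    {s : UnitsQ E →ₗ[ℚ] UnitsQ k} (h : TameD v s) {t : UnitsQ E' →ₗ[ℚ] UnitsQ E} (ht : StC t)
    (hv : ∀ u, v (t u) = 0) {i : UnitsQ E' →ₗ[ℚ] UnitsQ k} (hi : StC i)
    (hs : ∀ u, s (t u) = i u) (n : ℕ) (u : UnitsQ E) (y : MilnorQ E' n) :
    res h n (lm u (KM ht n y)) = v u • KM hi n y := by
  cases n with
  | zero => rw [res_zero, KM_comp ht h.st hi hs]
  | succ n => rw [res_succ, KM_comp ht h.st hi hs, res_vanish h ht hv, map_zero, sub_zero]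

lemma res_cK {k : Type u} [Field k] [Algebra F k] {θ : k} (hθ : IsIntegral F θ) (n : ℕ)
    (u : UnitsQ (RatFunc F)) (y : MilnorQ F n) :
    res (tP hθ) n (lm u (cK n y)) = vP hθ u • KM (StC_map (algebraMap F k)) n y := by
  apply res_cst
  · intro u
    refine LinearMap.congr_fun (f := (vP hθ).comp (unitsQMap (cst F))) (g := 0) (linQ_ext ?_) u
    intro a ha
    rw [LinearMap.comp_apply, cst_mkQ, vP_unit hθ (by simpa using ha), LinearMap.zero_apply]
  · intro u
    refine LinearMap.congr_fun (f := (sP hθ).comp (unitsQMap (cst F))) (linQ_ext ?_) u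
    intro a ha
    rw [LinearMap.comp_apply, cst_mkQ, sP_unit hθ (by simpa using ha), unitsQMap_mkQ, aeval_C]

lemma unitsQMap_id (u : UnitsQ F) : unitsQMap (RingHom.id F) u = u := by
  refine LinearMap.congr_fun (g := LinearMap.id) (linQ_ext ?_) u
  intro a ha
  rw [unitsQMap_mkQ]; rfl

lemma res_inf_cK (n : ℕ) (u : UnitsQ (RatFunc F)) (y : MilnorQ F n) :
    res (tInf F) n (lm u (cK n y)) = vInf F u • y := by
  have h := res_cst (tInf F) (StC_map (cst F)) (i := unitsQMap (RingHom.id F)) ?_ (StC_map _) ?_ n u y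
  · rw [KM_id _ unitsQMap_id] at h
    exact h
  · intro u
    refine LinearMap.congr_fun (f := (vInf F).comp (unitsQMap (cst F))) (g := 0) (linQ_ext ?_) u
    intro a ha
    rw [LinearMap.comp_apply, cst_mkQ, vInf_pm (by simpa using ha), LinearMap.zero_apply]
    simp
  · intro u
    refine LinearMap.congr_fun (f := (sInf F).comp (unitsQMap (cst F))) (linQ_ext ?_) u
    intro a ha
    rw [LinearMap.comp_apply, cst_mkQ, sInf_pm (by simpa using ha), unitsQMap_mkQ,
      leadingCoeff_C]
    rfl

lemma unitsQMap_comp {K M : Type u} [Field K] [Field M] (f : F →+* K) (g : K →+* M)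
    (u : UnitsQ F) : unitsQMap g (unitsQMap f u) = unitsQMap (g.comp f) u := by
  refine LinearMap.congr_fun (f := (unitsQMap g).comp (unitsQMap f)) (linQ_ext ?_) u
  intro a ha
  simp only [LinearMap.comp_apply, unitsQMap_mkQ]
  rfl

lemma KM_map_comp {K M : Type u} [Field K] [Field M] (f : F →+* K) (g : K →+* M) (h : F →+* M)
    (hh : ∀ a, g (f a) = h a) (n : ℕ) (x : MilnorQ F n) :
    KM (StC_map g) n (KM (StC_map f) n x) = KM (StC_map h) n x := by
  apply KM_comp
  intro u
  rw [unitsQMap_comp]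
  congr 2
  ext a
  exact hh a

end const

/-! ### Base change of rational function fields -/

section basechange
variable {F K : Type u} [Field F] [Field K] [Algebra F K]

/-- base change -/
def J (F K : Type u) [Field F] [Field K] [Algebra F K] : RatFunc F →+* RatFunc K :=
  IsFractionRing.lift (A := F[X]) (K := RatFunc F)
    (g := (algebraMap K[X] (RatFunc K)).comp (mapRingHom (algebraMap F K)))
    ((RatFunc.algebraMap_injective K).comp (map_injective _ (algebraMap F K).injective))

lemma J_pm (p : F[X]) : unitsQMap (J F K) (pm p) = pm (p.map (algebraMap F K)) := by
  rw [pm, unitsQMap_mkQ, J, IsFractionRing.lift_algebraMap]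
  rfl

lemma pm_pow {p : F[X]} (hp : p ≠ 0) (m : ℕ) : pm (p ^ m) = (m : ℚ) • pm p := by
  rw [pm, map_pow, mkQ_pow (aM_ne hp)]
  rfl

lemma res_J {k : Type u} [Field k] [Algebra K k] [Algebra F k] [IsScalarTower F K k] {θ : k}
    (hF : IsIntegral F θ) (hK : IsIntegral K θ) (n : ℕ) (x : MilnorQ (RatFunc F) (n + 1)) :
    res (tP hK) n (KM (StC_map (J F K)) (n + 1) x) =
      vP hK (pm ((minpoly F θ).map (algebraMap F K))) • res (tP hF) n x := by
  have h0 := minpoly.ne_zero hF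
  have h0' : (minpoly F θ).map (algebraMap F K) ≠ 0 := map_ne_zero h0
  have hae : ∀ g : F[X], aeval θ (g.map (algebraMap F K)) = aeval θ g :=
    fun g => aeval_map_algebraMap K θ g
  have hpm : ∀ (m : ℕ) (g : F[X]), g ≠ 0 → unitsQMap (J F K) (pm (minpoly F θ ^ m * g)) =
      (m : ℚ) • pm ((minpoly F θ).map (algebraMap F K)) + pm (g.map (algebraMap F K)) := by
    intro m g hg
    rw [J_pm, Polynomial.map_mul, Polynomial.map_pow, pm_mul (pow_ne_zero _ h0')
      (map_ne_zero hg), pm_pow h0']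
  apply compat2 _ _ _ _ (sP hK (pm ((minpoly F θ).map (algebraMap F K))))
  · intro u
    refine LinearMap.congr_fun (f := (vP hK).comp (unitsQMap (J F K)))
      (g := (vP hK (pm ((minpoly F θ).map (algebraMap F K)))) • vP hF) (lin_pm_ext ?_) u
    intro p hp
    obtain ⟨m, g, rfl, hg⟩ := exists_fac hF hp
    have hg0 : g ≠ 0 := by rintro rfl; simp at hg
    rw [LinearMap.comp_apply, hpm m g hg0, map_add, map_smul, vP_unit hK (g := g.map (algebraMap F K)) (by rwa [hae]),
      LinearMap.smul_apply, vP_fac hF hg]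
    simp only [smul_eq_mul]
    ring
  · intro u
    refine LinearMap.congr_fun (f := (sP hK).comp (unitsQMap (J F K)))
      (g := sP hF + (vP hF).smulRight (sP hK (pm ((minpoly F θ).map (algebraMap F K)))))
      (lin_pm_ext ?_) u
    intro p hp
    obtain ⟨m, g, rfl, hg⟩ := exists_fac hF hp
    have hg0 : g ≠ 0 := by rintro rfl; simp at hg
    rw [LinearMap.comp_apply, hpm m g hg0, map_add, map_smul, sP_unit hK (g := g.map (algebraMap F K)) (by rwa [hae]),
      LinearMap.add_apply, LinearMap.smulRight_apply, vP_fac hF hg, sP_fac hF hg, hae, add_comm]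

lemma res_inf_J (n : ℕ) (x : MilnorQ (RatFunc F) (n + 1)) :
    res (tInf K) n (KM (StC_map (J F K)) (n + 1) x) =
      KM (StC_map (algebraMap F K)) n (res (tInf F) n x) := by
  have h1 : TameD ((vInf K).comp (unitsQMap (J F K))) ((sInf K).comp (unitsQMap (J F K))) := by
    constructor
    · intro a b ha hb hab m y
      simp only [LinearMap.comp_apply, unitsQMap_mkQ]
      exact (tInf K).st _ _ (by simpa using ha) (by simpa using hb)
        (by rw [← map_add, hab, map_one]) m y
    · intro a b ha hb hab
      simp only [LinearMap.comp_apply, unitsQMap_mkQ]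
      exact (tInf K).vs _ _ (by simpa using ha) (by simpa using hb)
        (by rw [← map_add, hab, map_one])
  have h2 := compat2 (StC_map (J F K)) h1 (tInf K) 1 0 (by intro u; simp) (by intro u; simp) n x
  rw [h2, one_smul]
  symm
  apply KM_res
  · intro u
    refine LinearMap.congr_fun (lin_pm_ext ?_) u
    intro p hp
    rw [LinearMap.comp_apply, J_pm, vInf_pm hp, vInf_pm (map_ne_zero hp), natDegree_map]
  · intro u
    refine LinearMap.congr_fun (f := (unitsQMap (algebraMap F K)).comp (sInf F))
      (lin_pm_ext ?_) u
    intro p hp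
    rw [LinearMap.comp_apply, LinearMap.comp_apply, J_pm, sInf_pm hp, sInf_pm (map_ne_zero hp),
      leadingCoeff_map, unitsQMap_mkQ]

end basechange

/-! ### Galois descent -/

section descent
variable {F K : Type u} [Field F] [Field K] [Algebra F K] [FiniteDimensional F K] [IsGalois F K]

theorem desc_inj (n : ℕ) (x : MilnorQ F n) (hx : KM (StC_map (algebraMap F K)) n x = 0) :
    x = 0 := by
  let pb := Field.powerBasisOfFiniteOfSeparable F K
  have ha : IsIntegral F pb.gen := pb.isIntegral_gen
  set π₀ := minpoly F pb.gen with hπ₀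
  have hMI : MI π₀ := ⟨minpoly.monic ha, minpoly.irreducible ha⟩
  have h := reciprocity (x := lm (pm π₀) (cK n x)) (by
    intro π hπ k _ _ θ hθ hmin
    rw [res_cK]
    by_cases hc : minpoly F θ = π₀
    · let f : K →ₐ[F] k := pb.lift θ (by rw [← hπ₀, ← hc]; exact minpoly.aeval F θ)
      rw [← KM_map_comp (algebraMap F K) f.toRingHom (algebraMap F k) (fun a => f.commutes a), hx,
        map_zero, smul_zero]
    · rw [vP_other hθ hMI hc, zero_smul])
  rw [res_inf_cK, vInf_pm hMI.1.ne_zero, smul_eq_zero] at h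
  rcases h with h | h
  · have := hMI.2.natDegree_pos
    simp at h
    omega
  · exact h

theorem exists_single (pb : PowerBasis F K) (n : ℕ) (y : MilnorQ K n) :
    ∃ x : MilnorQ (RatFunc F) (n + 1), res (tP pb.isIntegral_gen) n x = y ∧
      ∀ π : F[X], MI π → π ≠ minpoly F pb.gen → RZ π x := by
  have ha : IsIntegral F pb.gen := pb.isIntegral_gen
  have hMI : MI (minpoly F pb.gen) := ⟨minpoly.monic ha, minpoly.irreducible ha⟩
  obtain ⟨e, he⟩ := Nat.exists_eq_succ_of_ne_zero hMI.2.natDegree_pos.ne'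
  obtain ⟨ζ, hζ, hζ'⟩ := exists_lift ha (fun z => (pb.exists_eq_aeval' z).imp fun _ h => h.symm)
    he n y
  obtain ⟨x, h1, h2⟩ := correction n e (lm (pm (minpoly F pb.gen)) ζ)
  have hx : x = (x - lm (pm (minpoly F pb.gen)) ζ) + lm (pm (minpoly F pb.gen)) ζ := by abel
  refine ⟨x, ?_, ?_⟩
  · rw [hx, map_add, RZ_L (π := minpoly F pb.gen) (by omega) h1 K pb.gen ha rfl, zero_add,
      res_s0 _ (sP_self ha), vP_self, one_smul, hζ']
  · intro π hπ hne
    rcases Nat.lt_or_ge e π.natDegree with h | h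
    · rw [hx]
      exact RZ_add (RZ_L h h1) (RZ_other hMI hne h hζ)
    · exact h2 π hπ h

theorem desc_norm (n : ℕ) (y : MilnorQ K n) : ∃ x : MilnorQ F n,
    KM (StC_map (algebraMap F K)) n x =
      ∑ σ : K ≃ₐ[F] K, KM (StC_map σ.toAlgHom.toRingHom) n y := by
  classical
  let pb := Field.powerBasisOfFiniteOfSeparable F K
  have ha : IsIntegral F pb.gen := pb.isIntegral_gen
  obtain ⟨x, hx1, hx2⟩ := exists_single pb n y
  let z := KM (StC_map (J F K)) (n + 1) x - ∑ σ : K ≃ₐ[F] K,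
    lm (pm (X - C (σ pb.gen))) (cK n (KM (StC_map σ.toAlgHom.toRingHom) n y))
  have hz : ∀ π : K[X], MI π → RZ π z := by
    intro π hπ k _ _ θ hK hmin
    letI : Algebra F k := ((algebraMap K k).comp (algebraMap F K)).toAlgebra
    haveI : IsScalarTower F K k := IsScalarTower.of_algebraMap_eq (fun _ => rfl)
    have hF : IsIntegral F θ := isIntegral_trans (A := K) θ hK
    have hminσ : ∀ σ : K ≃ₐ[F] K, θ = algebraMap K k (σ pb.gen) →
        minpoly F θ = minpoly F pb.gen := by
      intro σ h
      rw [h, minpoly.algebraMap_eq (algebraMap K k).injective, minpoly.algEquiv_eq]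
    have hv0 : ∀ b : K, θ ≠ algebraMap K k b → vP hK (pm (X - C b)) = 0 := by
      intro b hb
      apply vP_unit hK
      simpa [sub_eq_zero] using hb
    simp only [z, map_sub, map_sum, res_cK]
    rw [res_J hF hK]
    by_cases hc : minpoly F θ = minpoly F pb.gen
    · have hroot : ∃ σ₀ : K ≃ₐ[F] K, algebraMap K k (σ₀ pb.gen) = θ := by
        have hsp := IsGalois.splits F pb.gen
        have h0 := minpoly.aeval F θ
        rw [hc] at h0
        obtain ⟨b, hb⟩ := hsp.mem_range_of_isRoot (map_ne_zero (minpoly.ne_zero ha))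
          (i := algebraMap K k) (x := θ) (by
            rw [IsRoot, eval_map_algebraMap, aeval_map_algebraMap]
            exact h0)
        have hb0 : aeval b (minpoly F pb.gen) = 0 := by
          apply (algebraMap K k).injective
          rw [map_zero, ← aeval_algebraMap_apply, hb, h0]
        obtain ⟨σ₀, hσ⟩ := minpoly.exists_algEquiv_of_root' ha.isAlgebraic hb0
        exact ⟨σ₀, by rw [hσ, hb]⟩
      obtain ⟨σ₀, hσ₀⟩ := hroot
      have hm : minpoly K θ = X - C (σ₀ pb.gen) := by rw [← hσ₀, minpoly.eq_X_sub_C]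
      have he : vP hK (pm ((minpoly F θ).map (algebraMap F K))) = 1 := by
        have hdvd : minpoly K θ ∣ (minpoly F θ).map (algebraMap F K) :=
          minpoly.dvd_map_of_isScalarTower F K θ
        obtain ⟨q, hq⟩ := hdvd
        have hsep : ((minpoly F θ).map (algebraMap F K)).Separable := by
          rw [hc]
          have hs0 : (minpoly F pb.gen).Separable := IsGalois.separable F pb.gen
          exact hs0.map
        rw [hq] at hsep
        have hcop := hsep.isCoprime
        have hq0 : aeval θ q ≠ 0 := by
          intro h
          obtain ⟨r, s, hrs⟩ := hcop
          have := congrArg (aeval (R := K) θ) hrs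
          simp [h] at this
        rw [hq]
        simpa using vP_fac hK (m := 1) hq0
      rw [he, one_smul, Finset.sum_eq_single σ₀]
      · rw [← hm, vP_self, one_smul]
        let f : K →ₐ[F] k := (IsScalarTower.toAlgHom F K k).comp σ₀.toAlgHom
        have h1 := res_transfer ha hF f hσ₀ n x
        rw [← h1, hx1, sub_eq_zero]
        symm
        apply KM_map_comp
        intro a
        rfl
      · intro σ _ hne
        rw [hv0, zero_smul]
        intro h
        apply hne
        have : σ pb.gen = σ₀ pb.gen := (algebraMap K k).injective (by rw [hσ₀, ← h])
        have h2 := pb.algHom_ext (f := σ.toAlgHom) (g := σ₀.toAlgHom) this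
        ext a
        exact AlgHom.congr_fun h2 a
      · intro h; exact absurd (Finset.mem_univ _) h
    · rw [hx2 _ ⟨minpoly.monic hF, minpoly.irreducible hF⟩ hc k θ hF rfl, smul_zero, zero_sub,
        neg_eq_zero]
      apply Finset.sum_eq_zero
      intro σ _
      rw [hv0, zero_smul]
      intro h
      exact hc (hminσ σ h)
  have h := reciprocity hz
  simp only [z, map_sub, map_sum, res_inf_cK, res_inf_J] at h
  refine ⟨- res (tInf F) n x, ?_⟩
  rw [map_neg, sub_eq_zero.1 h, ← Finset.sum_neg_distrib]
  apply Finset.sum_congr rfl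
  intro σ _
  rw [vInf_pm (X_sub_C_ne_zero _), natDegree_X_sub_C]
  simp

theorem descent (n : ℕ) : Function.Injective (KM (StC_map (algebraMap F K)) n) ∧
    Set.range (KM (StC_map (algebraMap F K)) n) = {y : MilnorQ K n | ∀ σ : K ≃ₐ[F] K,
      KM (StC_map σ.toAlgHom.toRingHom) n y = y} := by
  refine ⟨(injective_iff_map_eq_zero _).2 (desc_inj n), ?_⟩
  ext y
  constructor
  · rintro ⟨x, rfl⟩ σ
    apply KM_map_comp
    intro a
    exact σ.commutes a
  · intro hy
    obtain ⟨x, hx⟩ := desc_norm (F := F) n y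
    rw [Finset.sum_congr rfl (fun σ _ => hy σ), Finset.sum_const, Finset.card_univ] at hx
    have hc : (Fintype.card (K ≃ₐ[F] K) : ℚ) ≠ 0 := by
      exact_mod_cast Fintype.card_ne_zero
    refine ⟨(Fintype.card (K ≃ₐ[F] K) : ℚ)⁻¹ • x, ?_⟩
    rw [map_smul, hx, ← Nat.cast_smul_eq_nsmul ℚ, inv_smul_smul₀ hc]

end descent

lemma powMap_mk {F K : Type u} [Field F] [Field K] (j : F →+* K) (n : ℕ)
    (f : MilnorQ F n →ₗ[ℚ] MilnorQ K n)
    (hf : ∀ x : ⋀[ℚ]^n (UnitsQ F), f (MilnorQ.mk x) = MilnorQ.mk (powMap n (unitsQMap j) x)) :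
    f = KM (StC_map j) n := by
  apply K_ext
  intro v
  rw [KM_sym, sym_apply, hf, sym_apply]
  congr 1
  apply Subtype.ext
  exact ExteriorAlgebra.map_apply_ιMulti _ _

end MK

end MKpart5

/-- Galois descent for rational Milnor K-theory. -/
theorem statement_18 (F₁ F₂ : Type u) [Field F₁] [Field F₂] [Algebra F₁ F₂]
    [FiniteDimensional F₁ F₂] [IsGalois F₁ F₂] (n : ℕ) (hn : 1 ≤ n)
    (jK : MilnorQ F₁ n →ₗ[ℚ] MilnorQ F₂ n)
    (hjK : ∀ x : ⋀[ℚ]^n (UnitsQ F₁),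
      jK (MilnorQ.mk x) = MilnorQ.mk (powMap n (unitsQMap (algebraMap F₁ F₂)) x))
    (T : (F₂ ≃ₐ[F₁] F₂) → (MilnorQ F₂ n →ₗ[ℚ] MilnorQ F₂ n))
    (hT : ∀ (σ : F₂ ≃ₐ[F₁] F₂) (x : ⋀[ℚ]^n (UnitsQ F₂)),
      T σ (MilnorQ.mk x) = MilnorQ.mk (powMap n (unitsQMap σ.toAlgHom.toRingHom) x)) :
    Function.Injective jK ∧
    Set.range jK = {y : MilnorQ F₂ n | ∀ σ : F₂ ≃ₐ[F₁] F₂, T σ y = y} := by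
  have h1 := MK.powMap_mk _ n jK hjK
  have h2 : T = fun σ => MK.KM (MK.StC_map σ.toAlgHom.toRingHom) n :=
    funext fun σ => MK.powMap_mk _ n (T σ) (hT σ)
  subst h1
  subst h2
  exact MK.descent n
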